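/- arXiv:1804.02065 — 2 statements merged into one kernel-verified Lean document; each statement's English description precedes it below -/
import Mathlib

section
/- The number of alternating ordered rooted trees of type I on n+1 vertices, labeled bijectively by {1,...,n+1}, equals n^n. -/
/-- Ordered (plane) rooted trees with natural-number labels. -/
inductive LTree : Type
  | node : ℕ → List LTree → LTree

namespace LTree

/-- The list of labels of a labeled ordered rooted tree (root first, depth-first). -/
def labels : LTree → List ℕ
  | .node a ts => a :: (ts.attach.map (fun x => labels x.1)).flatten
decreasing_by
  have := List.sizeOf_lt_of_mem x.2
  simp_wf
  omega

/-- `altFrom a d t` : the labels alternate along every path down `t`, where `a`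
is the label of the parent of the root of `t`; if `d = true` the root label must
be smaller than `a` (a descent), otherwise larger (an ascent). -/
def altFrom : ℕ → Bool → LTree → Prop
  | a, d, .node c ts =>
      (if d then c < a else a < c) ∧ ∀ x ∈ ts.attach, altFrom c (!d) x.1
termination_by _ _ t => sizeOf t
decreasing_by
  have := List.sizeOf_lt_of_mem x.2
  simp_wf
  omega

/-- Alternating of type I: along every path from the root the labels satisfy
`x₁ > x₂ < x₃ > x₄ < …`. -/
def AltI : LTree → Prop
  | .node a ts => ∀ t ∈ ts, altFrom a true t

/-- Alternating of type II: `x₁ < x₂ > x₃ < …`. -/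
def AltII : LTree → Prop
  | .node a ts => ∀ t ∈ ts, altFrom a false t

/-- A labeled ordered rooted tree on `n+1` vertices, labeled bijectively by `{1,…,n+1}`. -/
def Valid (n : ℕ) (t : LTree) : Prop :=
  t.labels.Nodup ∧ t.labels.length = n + 1 ∧ ∀ a ∈ t.labels, a ∈ Finset.Icc 1 (n + 1)

end LTree

/-!
Cutting a nonempty ordered forest into its first root, the children of that root and the remaining
trees gives a system of equations for the generating functions `U p` (resp. `V p`), in one variable
`X a` per label, of the forests alternating below a parent labeled `p` and starting with a descent
(resp. an ascent). The product `(1 - ∑ a < k, X a * V a) * (1 - ∑ a ≥ k, X a * U a)` does not depend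
on `k`; hence `E := U (N + 1)`, for the label set `{1, …, N}`, satisfies `E = ∏ a, (1 + X a * E)`
and `∑ a, X a * U a = 1 - E⁻¹`, which is the generating function of the trees of type I.

Modulo the squares of the variables, `(1 + X a * E) ^ r = 1 + r * X a * E` for every integer `r`, so
`E ^ r = ∏ a, (1 + r * X a * E)`. Expanding this product, induction on `k` and the binomial theorem
show that the coefficient in `E ^ r` of a product of `k ≥ 1` distinct variables is
`r * (r + k) ^ (k - 1)`, and `r = -1` gives `n ^ n`.
-/

section AbelIdentity

variable {R : Type*} [CommSemiring R]

/-- The Abel polynomial `r * (r + n) ^ (n - 1)`, with value `1` for `n = 0`, evaluated at `r`. -/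
def abelEval (r : R) : ℕ → R
  | 0 => 1
  | n + 1 => r * (r + (n + 1 : ℕ)) ^ n

theorem choose_succ_mul_abelEval (j m : ℕ) :
    ((j + m + 1).choose (j + 1) : R) * abelEval ((j + 1 : ℕ) : R) m =
      ((j + m + 1 : ℕ) : R) ^ m * (j + m).choose j := by
  cases m with
  | zero => simp [abelEval]
  | succ m =>
    have absorb := Nat.add_one_mul_choose_eq (j + (m + 1)) j
    simp only [abelEval]
    norm_cast
    rw [show j + 1 + (m + 1) = j + (m + 1) + 1 by omega, ← mul_assoc, ← absorb]
    exact congrArg Nat.cast (by ring)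

theorem sum_choose_mul_pow_mul_abelEval (r : R) (n : ℕ) :
    ∑ k ∈ Finset.range (n + 1), (n.choose k : R) * (r ^ k * abelEval (k : R) (n - k)) =
      abelEval r n := by
  cases n with
  | zero => simp [abelEval]
  | succ n =>
    have first_eq_zero : abelEval ((0 : ℕ) : R) (n + 1) = 0 := by simp [abelEval]
    rw [Finset.sum_range_succ', Nat.sub_zero, first_eq_zero, mul_zero, mul_zero, add_zero,
      abelEval, add_pow, Finset.mul_sum]
    refine Finset.sum_congr rfl fun j hj => ?_
    obtain ⟨m, rfl⟩ := Nat.exists_eq_add_of_le (Finset.mem_range_succ_iff.1 hj)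
    rw [Nat.add_sub_add_right, Nat.add_sub_cancel_left, mul_left_comm,
      choose_succ_mul_abelEval]
    ring

end AbelIdentity

section AlternatingSystem

variable {R : Type*} [CommRing R] {m n : ℕ} {x U V : ℕ → R}

theorem one_sub_sum_mul_one_sub_sum
    (hU : ∀ k ∈ Finset.Ico m n, U k = 1 + (∑ a ∈ Finset.Ico m k, x a * V a) * U k)
    (hV : ∀ k ∈ Finset.Ico m n, V k = 1 + (∑ a ∈ Finset.Ico (k + 1) n, x a * U a) * V k)
    {k : ℕ} (hmk : m ≤ k) (hkn : k ≤ n) :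
    (1 - ∑ a ∈ Finset.Ico m k, x a * V a) * (1 - ∑ a ∈ Finset.Ico k n, x a * U a) =
      1 - ∑ a ∈ Finset.Ico m n, x a * U a := by
  induction k, hmk using Nat.le_induction with
  | base => simp
  | succ k hmk ih =>
    have hk : k ∈ Finset.Ico m n := Finset.mem_Ico.2 ⟨hmk, hkn⟩
    have ih := ih (by omega)
    rw [Finset.sum_eq_sum_Ico_succ_bot hkn] at ih
    rw [Finset.sum_Ico_succ_top hmk]
    linear_combination ih + x k * hU k hk - x k * hV k hk

variable (hU : ∀ k ∈ Finset.Icc m n, U k = 1 + (∑ a ∈ Finset.Ico m k, x a * V a) * U k)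
  (hV : ∀ k ∈ Finset.Ico m n, V k = 1 + (∑ a ∈ Finset.Ico (k + 1) n, x a * U a) * V k)
  (hmn : m ≤ n)
include hU hV hmn

theorem one_sub_sum_mul_top_eq_one : (1 - ∑ a ∈ Finset.Ico m n, x a * U a) * U n = 1 := by
  have invariant := one_sub_sum_mul_one_sub_sum
    (fun k hk => hU k (Finset.Ico_subset_Icc_self hk)) hV hmn le_rfl
  rw [Finset.Ico_self, Finset.sum_empty, sub_zero, mul_one] at invariant
  rw [← invariant]
  linear_combination hU n (Finset.right_mem_Icc.2 hmn)

theorem prod_one_add_mul_top_eq_top : ∏ a ∈ Finset.Ico m n, (1 + x a * U n) = U n := by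
  have inverse := one_sub_sum_mul_top_eq_one hU hV hmn
  have invariant {k : ℕ} := one_sub_sum_mul_one_sub_sum (k := k)
    (fun k hk => hU k (Finset.Ico_subset_Icc_self hk)) hV
  have telescope : ∀ k, m ≤ k → k ≤ n →
      (1 - ∑ a ∈ Finset.Ico m k, x a * V a) * ∏ a ∈ Finset.Ico m k, (1 + x a * U n) = 1 := by
    intro k hmk
    induction k, hmk using Nat.le_induction with
    | base => simp
    | succ k hmk ih =>
      intro hkn
      have V_eq : V k = (1 - ∑ a ∈ Finset.Ico m (k + 1), x a * V a) * U n := by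
        linear_combination (-V k) * inverse - V k * U n * invariant (Nat.le_succ_of_le hmk) hkn
          + (1 - ∑ a ∈ Finset.Ico m (k + 1), x a * V a) * U n * hV k (Finset.mem_Ico.2 ⟨hmk, hkn⟩)
      have ih := ih (by omega)
      rw [Finset.sum_Ico_succ_top hmk] at V_eq ⊢
      rw [Finset.prod_Ico_succ_top hmk]
      linear_combination ih - x k * (∏ a ∈ Finset.Ico m k, (1 + x a * U n)) * V_eq
  have top := telescope n hmn le_rfl
  have last := invariant hmn le_rfl
  rw [Finset.Ico_self, Finset.sum_empty, sub_zero, mul_one] at last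
  rw [last] at top
  linear_combination U n * top - (∏ a ∈ Finset.Ico m n, (1 + x a * U n)) * inverse

end AlternatingSystem

theorem units_zpow_eq_prod_one_add_mul {ι R : Type*} [CommRing R] {s : Finset ι} {y : ι → R}
    (hy : ∀ a ∈ s, y a ^ 2 = 0) (u : Rˣ) (hu : ∏ a ∈ s, (1 + y a) = u) (r : ℤ) :
    ((u ^ r : Rˣ) : R) = ∏ a ∈ s, (1 + r * y a) := by
  have step (r : ℤ) : ∏ a ∈ s, (1 + ((r + 1 : ℤ) : R) * y a) = (∏ a ∈ s, (1 + r * y a)) * u := by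
    rw [← hu, ← Finset.prod_mul_distrib]
    refine Finset.prod_congr rfl fun a ha => ?_
    push_cast
    linear_combination (-r : R) * hy a ha
  induction r using Int.induction_on with
  | zero => simp
  | succ r ih => rw [zpow_add_one, Units.val_mul, ih, step]
  | pred r ih =>
    rw [zpow_sub_one, Units.val_mul, ih, Units.mul_inv_eq_iff_eq_mul, ← step, sub_add_cancel]

section SquarefreeCoefficients

open MvPowerSeries

variable {σ R : Type*} [CommRing R]

variable (σ R) in
/-- The ideal of the power series without squarefree monomials; calculations modulo this ideal
only see the squarefree coefficients, and there the variables have square zero. -/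
def nonSquarefreeIdeal : Ideal (MvPowerSeries σ R) where
  carrier := {f | ∀ m : σ →₀ ℕ, (∀ a, m a ≤ 1) → coeff m f = 0}
  add_mem' hf hg m hm := by rw [map_add, hf m hm, hg m hm, add_zero]
  zero_mem' _ _ := map_zero _
  smul_mem' g f hf m hm := by
    classical
    rw [smul_eq_mul, coeff_mul]
    refine Finset.sum_eq_zero fun p hp => ?_
    rw [hf p.2 fun a => (Finset.HasAntidiagonal.antidiagonal.snd_le hp a).trans (hm a), mul_zero]

theorem coeff_eq_of_mk_nonSquarefreeIdeal_eq {f g : MvPowerSeries σ R}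
    (h : Ideal.Quotient.mk (nonSquarefreeIdeal σ R) f = Ideal.Quotient.mk _ g)
    {m : σ →₀ ℕ} (hm : ∀ a, m a ≤ 1) : coeff m f = coeff m g := by
  have sub_mem : f - g ∈ nonSquarefreeIdeal σ R := Ideal.Quotient.eq.1 h
  rw [← sub_eq_zero, ← map_sub, sub_mem m hm]

theorem X_sq_mem_nonSquarefreeIdeal (a : σ) : X a ^ 2 ∈ nonSquarefreeIdeal σ R := by
  classical
  intro m hm
  rw [coeff_X_pow, if_neg]
  rintro rfl
  simpa using hm a

variable [DecidableEq σ]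

theorem toFinsupp_val_le_one (s : Finset σ) (a : σ) : Multiset.toFinsupp s.val a ≤ 1 :=
  Multiset.nodup_iff_count_le_one.1 s.nodup a

theorem coeff_toFinsupp_prod_X_mul (s t : Finset σ) (f : MvPowerSeries σ R) :
    coeff (Multiset.toFinsupp t.val) ((∏ a ∈ s, X a) * f) =
      if s ⊆ t then coeff (Multiset.toFinsupp (t \ s).val) f else 0 := by
  have prod_X_eq : ∏ a ∈ s, (X a : MvPowerSeries σ R) =
      monomial (Multiset.toFinsupp s.val) 1 := by
    induction s using Finset.induction_on with
    | empty => simp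
    | insert a s ha ih =>
      rw [Finset.prod_insert ha, ih, X, monomial_mul_monomial, one_mul,
        Finset.insert_val_of_notMem ha, ← Multiset.singleton_add, map_add,
        Multiset.toFinsupp_singleton]
  have le_iff : Multiset.toFinsupp s.val ≤ Multiset.toFinsupp t.val ↔ s ⊆ t :=
    Finsupp.orderIsoMultiset.symm.le_iff_le.trans Finset.val_le_iff
  have sub_eq : Multiset.toFinsupp t.val - Multiset.toFinsupp s.val =
      Multiset.toFinsupp (t \ s).val := by
    ext a
    simp [Finset.sdiff_val]
  simp only [prod_X_eq, coeff_monomial_mul, one_mul, le_iff, sub_eq]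

theorem coeff_toFinsupp_prod_one_add_X_mul {s t : Finset σ} (hts : t ⊆ s)
    (f : MvPowerSeries σ R) :
    coeff (Multiset.toFinsupp t.val) (∏ a ∈ s, (1 + X a * f)) =
      ∑ K ∈ t.powerset, coeff (Multiset.toFinsupp (t \ K).val) (f ^ K.card) := by
  simp only [Finset.prod_one_add, map_sum, Finset.prod_mul_distrib, Finset.prod_const,
    coeff_toFinsupp_prod_X_mul]
  rw [← Finset.sum_filter]
  congr 1
  ext K
  simp only [Finset.mem_filter, Finset.mem_powerset, and_iff_right_iff_imp]
  exact fun hK => hK.trans hts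

variable {s : Finset σ} {E : (MvPowerSeries σ R)ˣ}
  (hE : ∏ a ∈ s, (1 + X a * E.val) = E.val)
include hE

theorem coeff_toFinsupp_zpow_eq_coeff_prod (t : Finset σ) (r : ℤ) :
    coeff (Multiset.toFinsupp t.val) (E ^ r).val =
      coeff (Multiset.toFinsupp t.val)
        (∏ a ∈ s, (1 + X a * ((r : MvPowerSeries σ R) * E.val))) := by
  let q := Ideal.Quotient.mk (nonSquarefreeIdeal σ R)
  have X_mul_sq (a : σ) : q (X a * E.val) ^ 2 = 0 := by
    rw [← map_pow, mul_pow]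
    exact Ideal.Quotient.eq_zero_iff_mem.2 (Ideal.mul_mem_right _ _ (X_sq_mem_nonSquarefreeIdeal a))
  have congr_mod := units_zpow_eq_prod_one_add_mul (s := s) (y := fun a => q (X a * E.val))
    (fun a _ => X_mul_sq a) (Units.map q E) (by simpa using congrArg q hE) r
  refine coeff_eq_of_mk_nonSquarefreeIdeal_eq ?_ (toFinsupp_val_le_one t)
  simpa [← map_zpow, mul_left_comm] using congr_mod

theorem coeff_toFinsupp_zpow {t : Finset σ} (hts : t ⊆ s) (r : ℤ) :
    coeff (Multiset.toFinsupp t.val) (E ^ r).val =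
      abelEval (r : R) t.card := by
  induction t using Finset.strongInduction generalizing r with
  | H t ih =>
    have term_eq : ∀ K ∈ t.powerset,
        coeff (Multiset.toFinsupp (t \ K).val) (((r : MvPowerSeries σ R) * E.val) ^ K.card) =
          (r : R) ^ K.card * abelEval (K.card : R) (t.card - K.card) := by
      intro K hK
      have hKt := Finset.mem_powerset.1 hK
      rw [mul_pow, ← Int.cast_pow, ← zsmul_eq_mul, map_zsmul, zsmul_eq_mul, Int.cast_pow]
      congr 1
      rcases K.eq_empty_or_nonempty with rfl | hK_ne
      · rcases t.eq_empty_or_nonempty with rfl | ht_ne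
        · simp [abelEval]
        · obtain ⟨k, hk⟩ := Nat.exists_eq_succ_of_ne_zero ht_ne.card_ne_zero
          simp [abelEval, coeff_one, ht_ne.ne_empty, hk]
      · rw [← Finset.card_sdiff_of_subset hKt]
        simpa using ih _ (Finset.sdiff_ssubset hKt hK_ne) (Finset.sdiff_subset.trans hts) K.card
    rw [coeff_toFinsupp_zpow_eq_coeff_prod hE, coeff_toFinsupp_prod_one_add_X_mul hts,
      Finset.sum_congr rfl term_eq,
      Finset.sum_powerset_apply_card fun k => (r : R) ^ k * abelEval (k : R) (t.card - k)]
    simp only [nsmul_eq_mul, sum_choose_mul_pow_mul_abelEval]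

end SquarefreeCoefficients

section GeneratingSeries

open MvPowerSeries Filter

variable {α β σ : Type*} (R : Type*) [CommSemiring R]

/-- The generating series of a class `α` whose members `x` have weight the monomial with exponent
`w x`. Its coefficients are meaningful if the fibers of `w` are finite, which is expressed by
`Tendsto w cofinite cofinite` (`Nat.card` of an infinite type is `0`). -/
noncomputable def genSeries (w : α → σ →₀ ℕ) : MvPowerSeries σ R :=
  fun m => (Nat.card {x // w x = m} : R)

theorem coeff_genSeries (w : α → σ →₀ ℕ) (m : σ →₀ ℕ) :
    coeff m (genSeries R w) = (Nat.card {x // w x = m} : R) := rfl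

theorem finite_fiber_of_tendsto_cofinite {w : α → β} (hw : Tendsto w cofinite cofinite) (m : β) :
    Finite {x // w x = m} :=
  Set.Finite.to_subtype (s := w ⁻¹' {m})
    (by simpa using hw (Set.finite_singleton m).compl_mem_cofinite)

theorem genSeries_comp_equiv (e : α ≃ β) (w : β → σ →₀ ℕ) :
    genSeries R (w ∘ e) = genSeries R w := by
  ext m
  simp only [coeff_genSeries]
  rw [Nat.card_congr (e.subtypeEquiv (p := fun x => (w ∘ e) x = m) (q := fun x => w x = m)
    fun _ => Iff.rfl)]

theorem genSeries_option {w : α → σ →₀ ℕ} (hw : Tendsto w cofinite cofinite) :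
    genSeries R (fun o : Option α => o.elim 0 w) = 1 + genSeries R w := by
  classical
  ext m
  have := finite_fiber_of_tendsto_cofinite hw m
  let e : {o : Option α // o.elim 0 w = m} ≃ PLift (m = 0) ⊕ {x // w x = m} :=
    { toFun := fun
        | ⟨none, h⟩ => Sum.inl ⟨h.symm⟩
        | ⟨some x, h⟩ => Sum.inr ⟨x, h⟩
      invFun := Sum.elim (fun h => ⟨none, h.down.symm⟩) fun x => ⟨some x.1, x.2⟩
      left_inv := by rintro ⟨_ | _, _⟩ <;> rfl
      right_inv := by rintro (_ | _) <;> rfl }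
  rw [map_add, coeff_one, coeff_genSeries, coeff_genSeries, Nat.card_congr e, Nat.card_sum,
    Nat.cast_add]
  congr 1
  split_ifs with hm <;> simp [hm]

theorem genSeries_const_add (k : σ →₀ ℕ) (w : α → σ →₀ ℕ) :
    genSeries R (fun x => k + w x) = monomial k 1 * genSeries R w := by
  classical
  ext m
  rw [coeff_monomial_mul, one_mul, coeff_genSeries, coeff_genSeries]
  split_ifs with hkm
  · simp only [add_comm k, ← eq_tsub_iff_add_eq_of_le hkm]
  · have : IsEmpty {x // k + w x = m} := ⟨fun x => hkm (x.2 ▸ le_self_add)⟩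
    simp

theorem genSeries_sigma {ι : Type*} [Fintype ι] {α : ι → Type*} {w : (Σ i, α i) → σ →₀ ℕ}
    (hw : Tendsto w cofinite cofinite) :
    genSeries R w = ∑ i, genSeries R fun x => w ⟨i, x⟩ := by
  ext m
  have (i : ι) : Finite {x // w ⟨i, x⟩ = m} :=
    finite_fiber_of_tendsto_cofinite (hw.comp sigma_mk_injective.tendsto_cofinite) m
  let e : {x // w x = m} ≃ Σ i, {x // w ⟨i, x⟩ = m} :=
    { toFun := fun x => ⟨x.1.1, x.1.2, x.2⟩
      invFun := fun x => ⟨⟨x.1, x.2.1⟩, x.2.2⟩ }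
  simp only [map_sum, coeff_genSeries]
  rw [Nat.card_congr e, Nat.card_sigma, Nat.cast_sum]

theorem genSeries_prod {w : α → σ →₀ ℕ} {w' : β → σ →₀ ℕ}
    (hw : Tendsto w cofinite cofinite) (hw' : Tendsto w' cofinite cofinite) :
    genSeries R (fun x : α × β => w x.1 + w' x.2) = genSeries R w * genSeries R w' := by
  classical
  ext m
  have := finite_fiber_of_tendsto_cofinite hw
  have := finite_fiber_of_tendsto_cofinite hw'
  let e : {x : α × β // w x.1 + w' x.2 = m} ≃
      Σ p : Finset.HasAntidiagonal.antidiagonal m, {x // w x = p.1.1} × {y // w' y = p.1.2} :=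
    { toFun := fun x => ⟨⟨(w x.1.1, w' x.1.2), Finset.HasAntidiagonal.mem_antidiagonal.2 x.2⟩,
        ⟨x.1.1, rfl⟩, ⟨x.1.2, rfl⟩⟩
      invFun := fun x => ⟨(x.2.1, x.2.2), by
        rw [x.2.1.2, x.2.2.2, Finset.HasAntidiagonal.mem_antidiagonal.1 x.1.2]⟩
      left_inv := fun _ => rfl
      right_inv := by
        rintro ⟨⟨⟨p, q⟩, hpq⟩, ⟨x, hx : w x = p⟩, ⟨y, hy : w' y = q⟩⟩
        subst hx hy
        rfl }
  simp only [coeff_mul, coeff_genSeries]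
  rw [Nat.card_congr e, Nat.card_sigma, Nat.cast_sum,
    ← Finset.sum_coe_sort (Finset.HasAntidiagonal.antidiagonal m)]
  simp only [Nat.card_prod, Nat.cast_mul]

end GeneratingSeries

namespace LTree

open Filter MvPowerSeries

theorem labels_node (a : ℕ) (ts : List LTree) : (node a ts).labels = a :: ts.flatMap labels := by
  rw [labels, List.flatMap_def]
  congr 2
  exact List.attach_map_val (f := labels)

theorem altFrom_node (p : ℕ) (d : Bool) (a : ℕ) (ts : List LTree) :
    altFrom p d (node a ts) ↔ (if d then a < p else p < a) ∧ ∀ t ∈ ts, altFrom a (!d) t := by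
  rw [altFrom]
  exact and_congr_right fun _ =>
    ⟨fun h t ht => h ⟨t, ht⟩ (List.mem_attach _ _), fun h x _ => h x.1 x.2⟩

/-- The multiset of labels of an ordered forest, as the exponent of a monomial with one variable
per label. -/
noncomputable def content (f : List LTree) : ℕ →₀ ℕ :=
  Multiset.toFinsupp (f.flatMap labels : Multiset ℕ)

theorem content_nil : content [] = 0 :=
  map_zero _

theorem content_cons (a : ℕ) (c f : List LTree) :
    content (node a c :: f) = Finsupp.single a 1 + (content c + content f) := by
  simp only [content, List.flatMap_cons, labels_node]
  rw [← Multiset.toFinsupp_singleton, ← map_add, ← map_add]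
  rfl

theorem tendsto_content_cofinite : Tendsto content cofinite cofinite := by
  refine Tendsto.cofinite_of_finite_preimage_singleton fun m => ?_
  induction m using WellFoundedLT.induction with
  | ind m ih =>
    have smaller_finite : (⋃ m' ∈ Set.Iio m, content ⁻¹' {m'}).Finite :=
      (Set.finite_Iio m).biUnion ih
    refine (((m.support.finite_toSet.prod (smaller_finite.prod smaller_finite)).image
      fun x => node x.1 x.2.1 :: x.2.2).insert []).subset ?_
    rintro (_ | ⟨⟨a, c⟩, f⟩) rfl
    · exact Set.mem_insert _ _
    · have single_pos : 0 < Finsupp.single a 1 := by simp [pos_iff_ne_zero]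
      rw [content_cons]
      refine Set.mem_insert_of_mem _ ⟨(a, c, f), ⟨by simp, ?_, ?_⟩, rfl⟩
      · exact Set.mem_biUnion
          ((le_add_right le_rfl).trans_lt (lt_add_of_pos_left _ single_pos)) rfl
      · exact Set.mem_biUnion
          ((le_add_left le_rfl).trans_lt (lt_add_of_pos_left _ single_pos)) rfl

/-- The elements of `s` that can label a child of a vertex labeled `p`, the step from `p` to the
child being a descent if `d = true` and an ascent otherwise. -/
def childLabels (s : Finset ℕ) (d : Bool) (p : ℕ) : Finset ℕ :=
  {a ∈ s | if d then a < p else p < a}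

/-- An ordered forest with labels in `s` that alternates below a parent labeled `p`, starting with
a descent if `d = true` and with an ascent otherwise. -/
def IsAltForest (s : Finset ℕ) (d : Bool) (p : ℕ) (f : List LTree) : Prop :=
  (∀ t ∈ f, altFrom p d t) ∧ ∀ a ∈ f.flatMap labels, a ∈ s

theorem isAltForest_nil (s : Finset ℕ) (d : Bool) (p : ℕ) : IsAltForest s d p [] := by
  simp [IsAltForest]

theorem isAltForest_cons_iff {s : Finset ℕ} {d : Bool} {p a : ℕ} {c f : List LTree} :
    IsAltForest s d p (node a c :: f) ↔
      a ∈ childLabels s d p ∧ IsAltForest s (!d) a c ∧ IsAltForest s d p f := by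
  simp only [IsAltForest, childLabels, Finset.mem_filter, List.flatMap_cons, labels_node,
    List.forall_mem_cons, List.forall_mem_append, altFrom_node, List.cons_append]
  tauto

/-- The class of the forests satisfying `IsAltForest s d p`, to be counted by `altSeries s d p`. -/
def AltForest (s : Finset ℕ) (d : Bool) (p : ℕ) : Type :=
  {f : List LTree // IsAltForest s d p f}

namespace AltForest

/-- An ordered forest is empty, or consists of the root of its first tree, the forest below that
root, and the remaining trees. -/
def equivOption (s : Finset ℕ) (d : Bool) (p : ℕ) :
    AltForest s d p ≃
      Option (Σ a : childLabels s d p, AltForest s (!d) a × AltForest s d p) where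
  toFun
    | ⟨[], _⟩ => none
    | ⟨node a c :: f, h⟩ =>
      have h_cons := isAltForest_cons_iff.1 h
      some ⟨⟨a, h_cons.1⟩, ⟨c, h_cons.2.1⟩, ⟨f, h_cons.2.2⟩⟩
  invFun
    | none => ⟨[], isAltForest_nil s d p⟩
    | some ⟨a, c, f⟩ => ⟨node a c.1 :: f.1, isAltForest_cons_iff.2 ⟨a.2, c.2, f.2⟩⟩
  left_inv := by rintro ⟨_ | ⟨⟨a, c⟩, f⟩, h⟩ <;> rfl
  right_inv := by rintro (_ | ⟨a, c, f⟩) <;> rfl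

theorem tendsto_content_cofinite (s : Finset ℕ) (d : Bool) (p : ℕ) :
    Tendsto (fun f : AltForest s d p => content f.1) cofinite cofinite :=
  LTree.tendsto_content_cofinite.comp Subtype.val_injective.tendsto_cofinite

end AltForest

/-- The generating series of `AltForest s d p`, in one variable per label. -/
noncomputable def altSeries (s : Finset ℕ) (d : Bool) (p : ℕ) : MvPowerSeries ℕ ℤ :=
  genSeries ℤ fun f : AltForest s d p => content f.1

theorem altSeries_eq (s : Finset ℕ) (d : Bool) (p : ℕ) :
    altSeries s d p =
      1 + (∑ a ∈ childLabels s d p, X a * altSeries s (!d) a) * altSeries s d p := by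
  let w (x : Σ a : childLabels s d p, AltForest s (!d) a × AltForest s d p) : ℕ →₀ ℕ :=
    Finsupp.single x.1.1 1 + (content x.2.1.1 + content x.2.2.1)
  have content_eq : (fun f : AltForest s d p => content f.1) =
      (fun o => o.elim 0 w) ∘ AltForest.equivOption s d p := by
    funext ⟨f, hf⟩
    rcases f with _ | ⟨⟨a, c⟩, f⟩
    · exact content_nil
    · exact content_cons a c f
  have hw : Tendsto w cofinite cofinite := by
    have injective : Function.Injective fun x => (AltForest.equivOption s d p).symm (some x) :=
      (AltForest.equivOption s d p).symm.injective.comp (Option.some_injective _)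
    convert (AltForest.tendsto_content_cofinite s d p).comp injective.tendsto_cofinite using 1
    funext x
    exact (content_cons x.1 x.2.1.1 x.2.2.1).symm
  have summand_eq (a : childLabels s d p) :
      (genSeries ℤ fun x => w ⟨a, x⟩) = X a.1 * altSeries s (!d) a * altSeries s d p := by
    simp only [w]
    rw [genSeries_const_add, genSeries_prod ℤ (AltForest.tendsto_content_cofinite ..)
      (AltForest.tendsto_content_cofinite ..), mul_assoc]
    rfl
  calc altSeries s d p = 1 + genSeries ℤ w := by
        rw [altSeries, content_eq, genSeries_comp_equiv, genSeries_option ℤ hw]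
    _ = 1 + (∑ a ∈ childLabels s d p, X a * altSeries s (!d) a) * altSeries s d p := by
        rw [genSeries_sigma ℤ hw, Finset.sum_mul, ← Finset.sum_coe_sort (childLabels s d p)]
        simp only [summand_eq]

theorem altSeries_true_eq {m n p : ℕ} (hp : p ≤ n) :
    altSeries (Finset.Ico m n) true p =
      1 + (∑ a ∈ Finset.Ico m p, X a * altSeries (Finset.Ico m n) false a) *
        altSeries (Finset.Ico m n) true p := by
  have childLabels_eq : childLabels (Finset.Ico m n) true p = Finset.Ico m p := by
    ext a
    simp only [childLabels, Finset.mem_filter, Finset.mem_Ico, if_true]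
    omega
  rw [← childLabels_eq]
  exact altSeries_eq ..

theorem altSeries_false_eq {m n p : ℕ} (hp : m ≤ p) :
    altSeries (Finset.Ico m n) false p =
      1 + (∑ a ∈ Finset.Ico (p + 1) n, X a * altSeries (Finset.Ico m n) true a) *
        altSeries (Finset.Ico m n) false p := by
  have childLabels_eq : childLabels (Finset.Ico m n) false p = Finset.Ico (p + 1) n := by
    ext a
    simp only [childLabels, Finset.mem_filter, Finset.mem_Ico, Bool.false_eq_true, if_false]
    omega
  rw [← childLabels_eq]
  exact altSeries_eq ..

theorem exists_unit_sum_X_mul_altSeries_eq {m n : ℕ} (hmn : m ≤ n) :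
    ∃ E : (MvPowerSeries ℕ ℤ)ˣ, ∏ a ∈ Finset.Ico m n, (1 + X a * E.val) = E.val ∧
      ∑ a ∈ Finset.Ico m n, X a * altSeries (Finset.Ico m n) true a = 1 - (E⁻¹).val := by
  have hU : ∀ k ∈ Finset.Icc m n, altSeries (Finset.Ico m n) true k = _ := fun k hk =>
    altSeries_true_eq (Finset.mem_Icc.1 hk).2
  have hV : ∀ k ∈ Finset.Ico m n, altSeries (Finset.Ico m n) false k = _ := fun k hk =>
    altSeries_false_eq (Finset.mem_Ico.1 hk).1
  have inverse := one_sub_sum_mul_top_eq_one hU hV hmn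
  have product := prod_one_add_mul_top_eq_top hU hV hmn
  refine ⟨⟨_, _, (mul_comm _ _).trans inverse, inverse⟩, product, ?_⟩
  rw [Units.inv_mk, sub_sub_cancel]

/-- A tree of type I is its root together with the forest below the root. -/
def altIEquiv (s : Finset ℕ) :
    {t : LTree // t.AltI ∧ ∀ a ∈ t.labels, a ∈ s} ≃ Σ a : s, AltForest s true a where
  toFun
    | ⟨node a c, h⟩ =>
      have labels_mem := List.forall_mem_cons.1 (labels_node a c ▸ h.2)
      ⟨⟨a, labels_mem.1⟩, c, h.1, labels_mem.2⟩
  invFun x :=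
    ⟨node x.1 x.2.1, x.2.2.1, by
      rw [labels_node]
      exact List.forall_mem_cons.2 ⟨x.1.2, x.2.2.2⟩⟩
  left_inv := by rintro ⟨⟨a, c⟩, h⟩; rfl
  right_inv _ := rfl

theorem genSeries_altI (s : Finset ℕ) :
    genSeries ℤ (fun t : {t : LTree // t.AltI ∧ ∀ a ∈ t.labels, a ∈ s} => content [t.1]) =
      ∑ a ∈ s, X a * altSeries s true a := by
  let w (x : Σ a : s, AltForest s true a) : ℕ →₀ ℕ := Finsupp.single x.1.1 1 + content x.2.1
  have content_eq : (fun t : {t : LTree // t.AltI ∧ ∀ a ∈ t.labels, a ∈ s} => content [t.1]) =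
      w ∘ altIEquiv s := by
    funext ⟨⟨a, c⟩, h⟩
    rw [content_cons, content_nil, add_zero]
    rfl
  have hw : Tendsto w cofinite cofinite := by
    have injective : Function.Injective fun x => [((altIEquiv s).symm x).1] :=
      List.singleton_injective.comp (Subtype.val_injective.comp (altIEquiv s).symm.injective)
    convert tendsto_content_cofinite.comp injective.tendsto_cofinite using 1
    funext x
    simpa using (congrFun content_eq ((altIEquiv s).symm x)).symm
  rw [content_eq, genSeries_comp_equiv, genSeries_sigma ℤ hw, ← Finset.sum_coe_sort s]
  simp only [w, genSeries_const_add]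
  rfl

theorem valid_iff_content_eq {n : ℕ} {t : LTree} :
    t.Valid n ↔ content [t] = Multiset.toFinsupp (Finset.Icc 1 (n + 1)).val := by
  have content_eq : content [t] = Multiset.toFinsupp (t.labels : Multiset ℕ) := by simp [content]
  rw [content_eq, Multiset.toFinsupp.injective.eq_iff]
  constructor
  · rintro ⟨nodup, length_eq, mem_Icc⟩
    have labels_le : (t.labels : Multiset ℕ) ≤ (Finset.Icc 1 (n + 1)).val :=
      (Multiset.le_iff_subset (Multiset.coe_nodup.2 nodup)).2 mem_Icc
    exact Multiset.eq_of_le_of_card_le labels_le (by simp [length_eq])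
  · intro h
    refine ⟨?_, ?_, fun a ha => ?_⟩
    · rw [← Multiset.coe_nodup, h]
      exact Finset.nodup _
    · simpa using congrArg Multiset.card h
    · rwa [← Finset.mem_val, ← h]

theorem card_valid_altI (n : ℕ) :
    (Nat.card {t : LTree // t.Valid n ∧ t.AltI} : ℤ) =
      coeff (Multiset.toFinsupp (Finset.Icc 1 (n + 1)).val)
        (∑ a ∈ Finset.Icc 1 (n + 1), X a * altSeries (Finset.Icc 1 (n + 1)) true a) := by
  rw [← genSeries_altI, coeff_genSeries]
  congr 1
  simp only [← valid_iff_content_eq]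
  refine Nat.card_congr (Equiv.trans (Equiv.subtypeEquivRight fun t => ?_)
    (Equiv.subtypeSubtypeEquivSubtypeInter _ (Valid n)).symm)
  exact ⟨fun h => ⟨⟨h.2, h.1.2.2⟩, h.1⟩, fun h => ⟨h.2, h.1.1⟩⟩

end LTree

theorem stmt_11 (n : ℕ) :
    Nat.card {t : LTree // t.Valid n ∧ t.AltI} = n ^ n := by
  let s := Finset.Icc 1 (n + 1)
  obtain ⟨E, product_eq, trees_eq⟩ :=
    LTree.exists_unit_sum_X_mul_altSeries_eq (m := 1) (n := n + 1 + 1) (by omega)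
  rw [Finset.Ico_add_one_right_eq_Icc 1 (n + 1)] at product_eq trees_eq
  have coeff_inv := coeff_toFinsupp_zpow product_eq (subset_refl s) (-1)
  rw [zpow_neg_one] at coeff_inv
  have content_ne_zero : Multiset.toFinsupp s.val ≠ 0 := by simp [s]
  have card_eq : (Nat.card {t : LTree // t.Valid n ∧ t.AltI} : ℤ) = n ^ n :=
    calc (Nat.card {t : LTree // t.Valid n ∧ t.AltI} : ℤ)
        = MvPowerSeries.coeff (Multiset.toFinsupp s.val) (1 - (E⁻¹).val) := by
          rw [LTree.card_valid_altI, trees_eq]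
      _ = -abelEval (-1 : ℤ) s.card := by
          rw [map_sub, MvPowerSeries.coeff_one, if_neg content_ne_zero, coeff_inv, zero_sub,
            Int.cast_id]
      _ = n ^ n := by
          rw [Nat.card_Icc, Nat.add_sub_cancel]
          simp [abelEval]
  exact_mod_cast card_eq
end

section
/- For every n ≥ 1, the sum over all noncrossing pair partitions π of [2n] of the number of linear extensions of the forest order F(π) equals n^n, where F(π) is the partial order on the n+1 blocks of π extended by the imaginary block, in which a block is covered by its nearest outer block, with covering relations alternately oriented: a block at odd depth is below its nearest outer block, and a block at even depth is above its nearest outer block. -/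
/-- A noncrossing pair partition of `{1, …, 2n}`, with blocks recorded as ordered
pairs `(i, j)` with `i < j`. -/
structure NCP (n : ℕ) : Type where
  blocks : Finset (ℕ × ℕ)
  lt_of_mem : ∀ b ∈ blocks, b.1 < b.2
  mem_range : ∀ b ∈ blocks, 1 ≤ b.1 ∧ b.2 ≤ 2 * n
  cover : ∀ m, 1 ≤ m → m ≤ 2 * n → ∃! b, b ∈ blocks ∧ (m = b.1 ∨ m = b.2)
  noncrossing : ∀ b ∈ blocks, ∀ c ∈ blocks, ¬(b.1 < c.1 ∧ c.1 < b.2 ∧ b.2 < c.2)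

/-- `c` is an outer block of `b`. -/
def IsOuter (c b : ℕ × ℕ) : Prop := c.1 < b.1 ∧ b.2 < c.2

/-- `c` is the nearest outer block of `b` in the pair partition `π`. -/
def NearestOuter {n : ℕ} (π : NCP n) (c b : ℕ × ℕ) : Prop :=
  c ∈ π.blocks ∧ b ∈ π.blocks ∧ IsOuter c b ∧
    ∀ d ∈ π.blocks, IsOuter d b → d.1 ≤ c.1

open Classical in
/-- The depth of a block `b` of `π`: the imaginary block has depth `0`, and the
depth of a block is one plus the number of blocks strictly enclosing it. -/
noncomputable def blockDepth {n : ℕ} (π : NCP n) (b : ℕ × ℕ) : ℕ :=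
  1 + (π.blocks.filter fun c => IsOuter c b).card

/-!
Give every label `i` a variable `x i` with `x i ^ 2 = 0`, so that a labelled pairing whose labels
repeat has weight zero, and let `z` be the sum of all the variables. Decomposing a noncrossing
pairing at its first block, into the blocks nested inside it and the blocks to its right, gives a
recursion for the weighted sum over the labelled pairings that are alternating below a root
labelled `j`. Its solution is the normalised Abel polynomial `A n = X (X + n z) ^ (n - 1) / n!`
evaluated at the sum of the variables on the admissible side of `j`: the products in the recursion
are handled by the binomial type of the `A n`, and the sum over the label of the first block
telescopes, since `A (n + 1)` has derivative `A n (X + z)` and the variables square to zero. With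
the root label summed over as well, the total weight is `n ^ n * z ^ (n + 1) / (n + 1)!`, and
`z ^ (n + 1) = (n + 1)! * ∏ x i` leaves `n ^ n` times the only squarefree monomial of full degree.

The depth of a block has the parity of its opening point, so the alternating orientation can be read
off a block without knowing the blocks around it.
-/

section AbelPolynomials

open Polynomial
open Finset.HasAntidiagonal (antidiagonal)

variable {R : Type*} [CommRing R] [Algebra ℚ R]

/-- The normalised Abel polynomials `X (X + n z) ^ (n - 1) / n!`. -/
noncomputable def abelPoly (z : R) : ℕ → R[X]
  | 0 => 1
  | n + 1 => ((n + 1).factorial : ℚ)⁻¹ • (X * (X + C ((n + 1) * z)) ^ n)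

@[simp]
lemma abelPoly_zero (z : R) : abelPoly z 0 = 1 := rfl

lemma abelPoly_succ (z : R) (n : ℕ) :
    abelPoly z (n + 1) = ((n + 1).factorial : ℚ)⁻¹ • (X * (X + C ((n + 1) * z)) ^ n) := rfl

lemma eval_zero_abelPoly_succ (z : R) (n : ℕ) : (abelPoly z (n + 1)).eval 0 = 0 := by
  simp [abelPoly_succ]

lemma neg_eval_neg_self_abelPoly_succ (z : R) (n : ℕ) :
    -(abelPoly z (n + 1)).eval (-z) = ((n + 1).factorial : ℚ)⁻¹ • (n ^ n * z ^ (n + 1)) := by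
  have shift : -z + (n + 1) * z = n * z := by ring
  simp only [abelPoly_succ, eval_smul, eval_mul, eval_pow, eval_add, eval_X, eval_C, shift]
  rw [← smul_neg]
  ring_nf

lemma derivative_abelPoly_succ (z : R) (n : ℕ) :
    derivative (abelPoly z (n + 1)) = (abelPoly z n).comp (X + C z) := by
  cases n with
  | zero => simp [abelPoly_succ]
  | succ n =>
    have inv_factorial :
        ((n + 1).factorial : ℚ)⁻¹ = ((n + 2).factorial : ℚ)⁻¹ * (n + 2 : ℕ) := by
      rw [Nat.factorial_succ (n + 1), Nat.cast_mul]
      field_simp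
    have shift : X + C z + C ((n + 1) * z) = X + C (((n + 1 : ℕ) + 1) * z) := by
      simp only [map_mul, map_add, map_natCast, C_1, Nat.cast_add, Nat.cast_one]
      ring
    rw [abelPoly_succ, abelPoly_succ, inv_factorial, smul_comp, mul_smul, derivative_smul,
      mul_comp, pow_comp, add_comp, X_comp, C_comp, shift, derivative_mul, derivative_X,
      derivative_X_add_C_pow, Nat.add_sub_cancel, Nat.cast_smul_eq_nsmul, nsmul_eq_mul]
    congr 1
    simp only [map_mul, map_add, map_natCast, C_1, Nat.cast_add, Nat.cast_one, Nat.cast_ofNat]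
    ring

lemma sum_antidiagonal_C_eval_abelPoly_mul (z s : R) (n : ℕ) :
    ∑ p ∈ antidiagonal n, C ((abelPoly z p.1).eval s) * abelPoly z p.2 =
      (abelPoly z n).comp (X + C s) := by
  have : IsAddTorsionFree R := .of_module_rat R
  induction n with
  | zero => simp
  | succ n ih =>
    rw [← sub_eq_zero]
    set P := ∑ p ∈ antidiagonal (n + 1), C ((abelPoly z p.1).eval s) * abelPoly z p.2 -
      (abelPoly z (n + 1)).comp (X + C s)
    have derivative_P : derivative P = 0 := by
      have shift := congrArg (comp · (X + C z)) ih
      simp only [sum_comp, mul_comp, C_comp, comp_assoc, add_comp, X_comp] at shift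
      simp [P, Finset.Nat.sum_antidiagonal_succ', derivative_abelPoly_succ, derivative_comp, shift,
        comp_assoc, add_right_comm]
    have eval_P : P.eval 0 = 0 := by
      simp [P, Finset.Nat.sum_antidiagonal_succ', eval_finsetSum, eval_zero_abelPoly_succ]
    rw [eq_C_of_derivative_eq_zero derivative_P, coeff_zero_eq_eval_zero, eval_P, C_0]

lemma sum_antidiagonal_eval_abelPoly_mul (z s t : R) (n : ℕ) :
    ∑ p ∈ antidiagonal n, (abelPoly z p.1).eval s * (abelPoly z p.2).eval t =
      (abelPoly z n).eval (s + t) := by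
  simpa [eval_finsetSum, add_comm t s] using
    congrArg (eval t) (sum_antidiagonal_C_eval_abelPoly_mul z s n)

-- The convolution identity at `s = -t`, where it evaluates to `0`.
lemma sum_antidiagonal_neg_eval_neg_abelPoly_mul (z t : R) (n : ℕ) :
    ∑ p ∈ antidiagonal n,
        -(abelPoly z (p.1 + 1)).eval (-t) * (abelPoly z p.2).eval t =
      (abelPoly z (n + 1)).eval t := by
  have convolution := sum_antidiagonal_eval_abelPoly_mul z (-t) t (n + 1)
  rw [neg_add_cancel, eval_zero_abelPoly_succ, Finset.Nat.sum_antidiagonal_succ] at convolution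
  simp only [abelPoly_zero, eval_one, one_mul] at convolution
  simp only [neg_mul, Finset.sum_neg_distrib]
  linear_combination -convolution

lemma neg_eval_neg_abelPoly_succ_add (z t : R) {x : R} (hx : x ^ 2 = 0) (n : ℕ) :
    -(abelPoly z (n + 1)).eval (-(t + x)) =
      -(abelPoly z (n + 1)).eval (-t) + x * (abelPoly z n).eval (z - (t + x)) := by
  have neg_x_sq : (-x) ^ 2 = 0 := by rw [neg_sq, hx]
  rw [neg_add, eval_add_of_sq_eq_zero _ _ _ neg_x_sq, derivative_abelPoly_succ, ← sub_sub,
    sub_eq_add_neg (z - t), eval_add_of_sq_eq_zero _ _ _ neg_x_sq, eval_comp, eval_add, eval_X,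
    eval_C, neg_add_eq_sub]
  linear_combination (derivative (abelPoly z n)).eval (z - t) * hx

lemma sum_mul_eval_abelPoly_of_isLowerSet {ι : Type*} [LinearOrder ι] [Fintype ι] {x : ι → R}
    (hx : ∀ i, x i ^ 2 = 0) (n : ℕ) {T : Finset ι} (hT : IsLowerSet (T : Set ι)) :
    ∑ i ∈ T, x i * (abelPoly (∑ i, x i) n).eval (∑ l with i < l, x l) =
      -(abelPoly (∑ i, x i) (n + 1)).eval (-∑ i ∈ T, x i) := by
  induction T using Finset.induction_on_max with
  | empty => simp [eval_zero_abelPoly_succ]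
  | insert a T lt_a ih =>
    have notMem : a ∉ T := fun h => (lt_a a h).false
    have T_lower : IsLowerSet (T : Set ι) := fun i l hl hi =>
      (Finset.mem_insert.1 (hT hl (Finset.mem_insert_of_mem hi))).resolve_left
        (hl.trans_lt (lt_a i hi)).ne
    have compl_insert : (insert a T)ᶜ = ({l | a < l} : Finset ι) := by
      ext l
      have le_of_mem (h : l ∈ insert a T) : l ≤ a :=
        (Finset.mem_insert.1 h).elim le_of_eq fun h => (lt_a l h).le
      simpa using not_congr ⟨le_of_mem, fun h => hT h (Finset.mem_insert_self a T)⟩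
    have sum_gt : ∑ l with a < l, x l = ∑ i, x i - (∑ i ∈ T, x i + x a) := by
      rw [← compl_insert, ← Finset.sum_add_sum_compl (insert a T), Finset.sum_insert notMem]
      ring
    rw [Finset.sum_insert notMem, Finset.sum_insert notMem, ih T_lower, sum_gt,
      add_comm (x a) (∑ i ∈ T, x i), neg_eval_neg_abelPoly_succ_add _ _ (hx a), add_comm]

lemma sum_mul_eval_abelPoly_of_isUpperSet {ι : Type*} [LinearOrder ι] [Fintype ι] {x : ι → R}
    (hx : ∀ i, x i ^ 2 = 0) (n : ℕ) {T : Finset ι} (hT : IsUpperSet (T : Set ι)) :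
    ∑ i ∈ T, x i * (abelPoly (∑ i, x i) n).eval (∑ l with l < i, x l) =
      -(abelPoly (∑ i, x i) (n + 1)).eval (-∑ i ∈ T, x i) :=
  sum_mul_eval_abelPoly_of_isLowerSet (ι := ιᵒᵈ) hx n hT.toDual

end AbelPolynomials

section SquareZero

variable {ι R : Type*} [CommRing R]

lemma add_pow_succ_of_sq_eq_zero (u : R) {a : R} (ha : a ^ 2 = 0)
    (m : ℕ) : (u + a) ^ (m + 1) = u ^ (m + 1) + (m + 1) * u ^ m * a := by
  simpa using Polynomial.eval_add_of_sq_eq_zero (Polynomial.X ^ (m + 1)) u a ha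

lemma sum_pow_card_succ_eq_zero {x : ι → R} (hx : ∀ i, x i ^ 2 = 0) (T : Finset ι) :
    (∑ i ∈ T, x i) ^ (T.card + 1) = 0 := by
  classical
  induction T using Finset.induction_on with
  | empty => simp
  | insert a T ha ih =>
    rw [Finset.sum_insert ha, Finset.card_insert_of_notMem ha, add_comm (x a),
      add_pow_succ_of_sq_eq_zero _ (hx a), ih, pow_succ, ih]
    simp

lemma sum_pow_card_eq_factorial_mul_prod {x : ι → R} (hx : ∀ i, x i ^ 2 = 0) (T : Finset ι) :
    (∑ i ∈ T, x i) ^ T.card = T.card.factorial * ∏ i ∈ T, x i := by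
  classical
  induction T using Finset.induction_on with
  | empty => simp
  | insert a T ha ih =>
    rw [Finset.sum_insert ha, Finset.card_insert_of_notMem ha, add_comm (x a),
      add_pow_succ_of_sq_eq_zero _ (hx a), sum_pow_card_succ_eq_zero hx, ih, Finset.prod_insert ha,
      Nat.factorial_succ]
    push_cast
    ring

lemma prod_comp_eq_zero_of_not_injOn {κ : Type*} {x : ι → R} (hx : ∀ i, x i ^ 2 = 0) {f : κ → ι}
    {D : Finset κ} (hf : ¬ Set.InjOn f D) : ∏ c ∈ D, x (f c) = 0 := by
  classical
  simp only [Set.InjOn, not_forall] at hf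
  obtain ⟨c, hc, d, hd, hcd, hne⟩ := hf
  rw [← Finset.mul_prod_erase D _ hc,
    ← Finset.mul_prod_erase (D.erase c) _ (Finset.mem_erase.2 ⟨Ne.symm hne, hd⟩), hcd, ← mul_assoc,
    ← sq, hx, zero_mul]

lemma prod_comp_eq_prod_univ {M κ : Type*} [CommMonoid M] [Fintype ι] (x : ι → M) {f : κ → ι}
    {D : Finset κ} (hf : Set.InjOn f D) (hD : D.card = Fintype.card ι) :
    ∏ c ∈ D, x (f c) = ∏ i, x i := by
  classical
  rw [← Finset.prod_image hf,
    (Finset.card_eq_iff_eq_univ _).1 ((Finset.card_image_of_injOn hf).trans hD)]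

open Classical in
lemma sum_prod_comp_eq_card_nsmul {α κ : Type*} [Fintype ι] {x : ι → R} (hx : ∀ i, x i ^ 2 = 0)
    (f : κ → ι) (S : Finset α) (D : α → Finset κ) (hD : ∀ a ∈ S, (D a).card = Fintype.card ι) :
    ∑ a ∈ S, ∏ c ∈ D a, x (f c) =
      (S.filter fun a => Set.InjOn f (D a)).card • ∏ i, x i := by
  rw [← Finset.sum_const, Finset.sum_filter]
  refine Finset.sum_congr rfl fun a ha => ?_
  split_ifs with hf
  · exact prod_comp_eq_prod_univ x hf (hD a ha)
  · exact prod_comp_eq_zero_of_not_injOn hx hf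

end SquareZero

section SquareZeroAlgebra

open MvPolynomial

/-- The ideal of `K[Xᵢ]` generated by the squares `Xᵢ²`. -/
noncomputable def squaresIdeal (ι K : Type*) [CommRing K] : Ideal (MvPolynomial ι K) :=
  Ideal.span ((fun s => monomial s 1) '' Set.range fun i => Finsupp.single i 2)

variable {ι K : Type*} [CommRing K]

/-- The class of the variable `Xᵢ` in the quotient of `K[Xᵢ]` by the squares `Xᵢ²`, in which only
squarefree monomials survive. -/
noncomputable def squareZeroVar (K : Type*) [CommRing K] (i : ι) :
    MvPolynomial ι K ⧸ squaresIdeal ι K :=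
  Ideal.Quotient.mk _ (X i)

lemma squareZeroVar_sq (i : ι) : squareZeroVar K i ^ 2 = 0 := by
  rw [squareZeroVar, ← map_pow, Ideal.Quotient.eq_zero_iff_mem, X_pow_eq_monomial]
  exact Ideal.subset_span ⟨_, ⟨i, rfl⟩, rfl⟩

lemma smul_prod_squareZeroVar_eq_zero_iff [Fintype ι] (a : K) :
    a • ∏ i : ι, squareZeroVar K i = 0 ↔ a = 0 := by
  classical
  refine ⟨fun h => ?_, fun h => by rw [h, zero_smul]⟩
  set ones : ι →₀ ℕ := Finsupp.equivFunOnFinite.symm 1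
  have prod_X : ∏ i : ι, (X i : MvPolynomial ι K) = monomial ones 1 := by
    simp [monomial_eq, Finsupp.prod_fintype, ones]
  have mem : monomial ones a ∈ squaresIdeal ι K := by
    simp only [squareZeroVar, ← map_prod, prod_X, ← Ideal.Quotient.mkₐ_eq_mk K, ← map_smul] at h
    rw [Ideal.Quotient.mkₐ_eq_mk, Ideal.Quotient.eq_zero_iff_mem] at h
    simpa [smul_monomial] using h
  rw [squaresIdeal, mem_ideal_span_monomial_image] at mem
  by_contra ha
  obtain ⟨_, ⟨i, rfl⟩, two_le⟩ := mem ones (by rwa [mem_support_iff, coeff_monomial, if_pos rfl])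
  simpa [ones] using two_le i

end SquareZeroAlgebra

section LabelledPairings

/-- A block `(p, q)` together with a label. -/
abbrev LabelledBlock (ι : Type*) := (ℕ × ℕ) × ι

/-- `C` is a noncrossing pairing of the points strictly between `lo` and `hi`, with labelled
blocks. -/
structure IsPairing {ι : Type*} (lo hi : ℕ) (C : Finset (LabelledBlock ι)) : Prop where
  lt : lo < hi
  bounds : ∀ c ∈ C, lo < c.1.1 ∧ c.1.1 < c.1.2 ∧ c.1.2 < hi
  cover : ∀ m, lo < m → m < hi → ∃! c, c ∈ C ∧ (m = c.1.1 ∨ m = c.1.2)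
  noncrossing : ∀ b ∈ C, ∀ c ∈ C, ¬(b.1.1 < c.1.1 ∧ c.1.1 < b.1.2 ∧ b.1.2 < c.1.2)

/-- `d` is the nearest outer block of `c` in `C` extended by an outermost block `root`. -/
def IsParent {ι : Type*} (root : LabelledBlock ι) (C : Finset (LabelledBlock ι))
    (d c : LabelledBlock ι) : Prop :=
  (d = root ∨ d ∈ C) ∧ IsOuter d.1 c.1 ∧ ∀ e ∈ C, IsOuter e.1 c.1 → e.1.1 ≤ d.1.1

/-- The orientation of the covering relation between a block opening at `m`, labelled `i`, and its
parent, labelled `j`. The depth of a block is odd exactly when the block opens at an odd point, so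
this is the alternating orientation. -/
def Oriented {ι : Type*} [LT ι] (m : ℕ) (i j : ι) : Prop :=
  if Odd m then i < j else j < i

/-- The labels of the blocks of `C` and of `root` respect the alternating forest order. -/
def IsAlternating {ι : Type*} [LT ι] (root : LabelledBlock ι) (C : Finset (LabelledBlock ι)) :
    Prop :=
  ∀ c ∈ C, ∀ d, IsParent root C d c → Oriented c.1.1 c.2 d.2

/-- The blocks of `C` opening strictly between `a` and `b`. -/
def between {ι : Type*} (a b : ℕ) (C : Finset (LabelledBlock ι)) : Finset (LabelledBlock ι) :=
  C.filter fun c => a < c.1.1 ∧ c.1.1 < b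

instance {ι : Type*} [LT ι] [DecidableLT ι] (m : ℕ) (i j : ι) : Decidable (Oriented m i j) :=
  inferInstanceAs (Decidable (if Odd m then i < j else j < i))

variable {ι : Type*} {lo hi q : ℕ} {i : ι} {C C₁ C₂ : Finset (LabelledBlock ι)}

lemma mem_between {a b : ℕ} {c : LabelledBlock ι} :
    c ∈ between a b C ↔ c ∈ C ∧ a < c.1.1 ∧ c.1.1 < b :=
  Finset.mem_filter

lemma isPairing_empty (lo : ℕ) : IsPairing lo (lo + 1) (∅ : Finset (LabelledBlock ι)) where
  lt := lo.lt_succ_self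
  bounds := by simp
  cover m _ _ := by omega
  noncrossing := by simp

lemma IsPairing.eq_of_mem (h : IsPairing lo hi C) {c d : LabelledBlock ι} (hc : c ∈ C) (hd : d ∈ C)
    {m : ℕ} (hmc : m = c.1.1 ∨ m = c.1.2) (hmd : m = d.1.1 ∨ m = d.1.2) : c = d := by
  have bounds_c := h.bounds c hc
  exact (h.cover m (by omega) (by omega)).unique ⟨hc, hmc⟩ ⟨hd, hmd⟩

lemma IsPairing.two_mul_card (h : IsPairing lo hi C) : 2 * C.card = hi - lo - 1 := by
  have endpoints_eq : Finset.Ioo lo hi = C.biUnion fun c => {c.1.1, c.1.2} := by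
    ext m
    simp only [Finset.mem_Ioo, Finset.mem_biUnion, Finset.mem_insert, Finset.mem_singleton]
    constructor
    · rintro ⟨lo_lt, lt_hi⟩
      exact (h.cover m lo_lt lt_hi).exists
    · rintro ⟨c, hc, hm⟩
      have := h.bounds c hc
      omega
  have disjoint_endpoints :
      (C : Set (LabelledBlock ι)).PairwiseDisjoint fun c => ({c.1.1, c.1.2} : Finset ℕ) := by
    intro c hc d hd hcd
    refine Finset.disjoint_left.2 fun m hmc hmd => hcd (h.eq_of_mem hc hd (m := m) ?_ ?_)
    · simpa using hmc
    · simpa using hmd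
  rw [← Nat.card_Ioo, endpoints_eq, Finset.card_biUnion disjoint_endpoints,
    Finset.sum_congr rfl fun c hc => Finset.card_pair (h.bounds c hc).2.1.ne, Finset.sum_const,
    smul_eq_mul, mul_comm]

lemma IsPairing.restrict (h : IsPairing lo hi C) {a b : ℕ} (ha : lo ≤ a) (hab : a < b)
    (hb : b ≤ hi) (closed : ∀ c ∈ C, a < c.1.1 ∧ c.1.1 < b ↔ a < c.1.2 ∧ c.1.2 < b) :
    IsPairing a b (between a b C) where
  lt := hab
  bounds c hc := by
    obtain ⟨hc, hac, hcb⟩ := mem_between.1 hc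
    have := h.bounds c hc
    have := closed c hc
    omega
  cover m ham hmb := by
    obtain ⟨c, ⟨hc, hm⟩, unique⟩ := h.cover m (by omega) (by omega)
    have := closed c hc
    exact ⟨c, ⟨mem_between.2 ⟨hc, by omega⟩, hm⟩, fun d hd =>
      unique d ⟨(mem_between.1 hd.1).1, hd.2⟩⟩
  noncrossing b hb c hc := h.noncrossing b (mem_between.1 hb).1 c (mem_between.1 hc).1

variable [DecidableEq ι]

lemma IsPairing.insert_union (h₁ : IsPairing (lo + 1) q C₁) (h₂ : IsPairing q hi C₂)
    (i : ι) :
    IsPairing lo hi (insert ((lo + 1, q), i) (C₁ ∪ C₂)) where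
  lt := by have := h₁.lt; have := h₂.lt; omega
  bounds := by
    have := h₁.lt
    have := h₂.lt
    have := h₁.bounds
    have := h₂.bounds
    grind
  cover m lo_lt lt_hi := by
    have := h₁.bounds
    have := h₂.bounds
    have := h₁.lt
    have := h₂.lt
    rcases lt_trichotomy m q with hmq | rfl | hqm
    · rcases (Nat.succ_le_of_lt lo_lt).eq_or_lt with rfl | hlom
      · exact ⟨((lo + 1, q), i), by grind⟩
      · obtain ⟨c, hc, unique⟩ := h₁.cover m hlom hmq
        exact ⟨c, by grind⟩
    · exact ⟨((lo + 1, m), i), by grind⟩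
    · obtain ⟨c, hc, unique⟩ := h₂.cover m hqm lt_hi
      exact ⟨c, by grind⟩
  noncrossing := by
    have := h₁.bounds
    have := h₂.bounds
    have := h₁.noncrossing
    have := h₂.noncrossing
    grind

lemma between_insert_union_left (h₁ : IsPairing (lo + 1) q C₁) (h₂ : IsPairing q hi C₂) :
    between (lo + 1) q (insert ((lo + 1, q), i) (C₁ ∪ C₂)) = C₁ := by
  have := h₁.lt
  have := h₂.lt
  have := h₁.bounds
  have := h₂.bounds
  ext c
  grind [mem_between]

lemma between_insert_union_right (h₁ : IsPairing (lo + 1) q C₁) (h₂ : IsPairing q hi C₂) :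
    between q hi (insert ((lo + 1, q), i) (C₁ ∪ C₂)) = C₂ := by
  have := h₁.lt
  have := h₂.lt
  have := h₁.bounds
  have := h₂.bounds
  ext c
  grind [mem_between]

lemma IsPairing.exists_eq_insert_union (h : IsPairing lo hi C) (hlo : lo + 1 < hi) :
    ∃ q i, IsPairing (lo + 1) q (between (lo + 1) q C) ∧
      IsPairing q hi (between q hi C) ∧
      C = insert ((lo + 1, q), i) (between (lo + 1) q C ∪ between q hi C) := by
  obtain ⟨⟨⟨p, q⟩, i⟩, ⟨hb, hp⟩, -⟩ := h.cover (lo + 1) (by omega) hlo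
  have bounds_b : lo < p ∧ p < q ∧ q < hi := h.bounds _ hb
  obtain rfl : p = lo + 1 := by
    rcases hp with hp | hp <;> dsimp only at hp <;> omega
  have eq_or_endpoints_ne (c) (hc : c ∈ C) : c = ((lo + 1, q), i) ∨
      c.1.1 ≠ lo + 1 ∧ c.1.1 ≠ q ∧ c.1.2 ≠ q :=
    or_iff_not_imp_left.2 fun hne =>
      ⟨fun e => hne (h.eq_of_mem hc hb (.inl rfl) (.inl e)),
        fun e => hne (h.eq_of_mem hc hb (.inl rfl) (.inr e)),
        fun e => hne (h.eq_of_mem hc hb (.inr rfl) (.inr e))⟩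
  have := h.bounds
  have := h.noncrossing
  refine ⟨q, i, h.restrict (by omega) (by omega) (by omega) ?_,
    h.restrict (by omega) (by omega) le_rfl ?_, ?_⟩
  · grind
  · grind
  · ext c
    grind [mem_between]

variable {root : LabelledBlock ι}

lemma isParent_first_iff (h₁ : IsPairing (lo + 1) q C₁) (h₂ : IsPairing q hi C₂)
    (hlo : root.1.1 ≤ lo) (hhi : hi ≤ root.1.2) {d : LabelledBlock ι} :
    IsParent root (insert ((lo + 1, q), i) (C₁ ∪ C₂)) d ((lo + 1, q), i) ↔ d = root := by
  have := h₁.lt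
  have := h₂.lt
  have := h₁.bounds
  have := h₂.bounds
  simp only [IsParent, IsOuter, Finset.mem_insert, Finset.mem_union, forall_eq_or_imp]
  grind

lemma isParent_left_iff (h₁ : IsPairing (lo + 1) q C₁) (h₂ : IsPairing q hi C₂)
    (hlo : root.1.1 ≤ lo) {c d : LabelledBlock ι} (hc : c ∈ C₁) :
    IsParent root (insert ((lo + 1, q), i) (C₁ ∪ C₂)) d c ↔
      IsParent ((lo + 1, q), i) C₁ d c := by
  have := h₁.lt
  have := h₂.lt
  have := h₁.bounds
  have := h₂.bounds
  simp only [IsParent, IsOuter, Finset.mem_insert, Finset.mem_union, forall_eq_or_imp]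
  grind

lemma isParent_right_iff (h₁ : IsPairing (lo + 1) q C₁) (h₂ : IsPairing q hi C₂)
    {c d : LabelledBlock ι} (hc : c ∈ C₂) :
    IsParent root (insert ((lo + 1, q), i) (C₁ ∪ C₂)) d c ↔ IsParent root C₂ d c := by
  have := h₁.lt
  have := h₂.lt
  have := h₁.bounds
  have := h₂.bounds
  simp only [IsParent, IsOuter, Finset.mem_insert, Finset.mem_union, forall_eq_or_imp]
  grind

lemma isAlternating_insert_union_iff [LT ι] (h₁ : IsPairing (lo + 1) q C₁)
    (h₂ : IsPairing q hi C₂) (hlo : root.1.1 ≤ lo) (hhi : hi ≤ root.1.2) :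
    IsAlternating root (insert ((lo + 1, q), i) (C₁ ∪ C₂)) ↔
      Oriented (lo + 1) i root.2 ∧ IsAlternating ((lo + 1, q), i) C₁ ∧ IsAlternating root C₂ := by
  simp only [IsAlternating, Finset.forall_mem_insert, Finset.forall_mem_union,
    isParent_first_iff h₁ h₂ hlo hhi, forall_eq]
  refine and_congr_right fun _ => and_congr ?_ ?_
  · exact forall₂_congr fun c hc => by simp only [isParent_left_iff h₁ h₂ hlo hc]
  · exact forall₂_congr fun c hc => by simp only [isParent_right_iff h₁ h₂ hc]

end LabelledPairings

section AlternatingPairings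

open Finset.HasAntidiagonal (antidiagonal)

variable {ι : Type*}

lemma IsPairing.insert_union_inj [DecidableEq ι] {lo hi q q' : ℕ} {i i' : ι}
    {C₁ C₂ C₁' C₂' : Finset (LabelledBlock ι)} (h₁ : IsPairing (lo + 1) q C₁)
    (h₂ : IsPairing q hi C₂) (h₁' : IsPairing (lo + 1) q' C₁') (h₂' : IsPairing q' hi C₂')
    (h : insert ((lo + 1, q), i) (C₁ ∪ C₂) = insert ((lo + 1, q'), i') (C₁' ∪ C₂')) :
    q = q' ∧ i = i' ∧ C₁ = C₁' ∧ C₂ = C₂' := by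
  have first_mem : ((lo + 1, q), i) ∈ insert ((lo + 1, q'), i') (C₁' ∪ C₂') :=
    h ▸ Finset.mem_insert_self _ _
  have first_eq : ((lo + 1, q), i) = ((lo + 1, q'), i') :=
    (h₁'.insert_union h₂' i').eq_of_mem first_mem (Finset.mem_insert_self _ _) (.inl rfl) (.inl rfl)
  obtain ⟨rfl, rfl⟩ : q = q' ∧ i = i' := by simpa using first_eq
  refine ⟨rfl, rfl, ?_, ?_⟩
  · rw [← between_insert_union_left h₁ h₂ (i := i), h, between_insert_union_left h₁' h₂']
  · rw [← between_insert_union_right h₁ h₂ (i := i), h, between_insert_union_right h₁' h₂']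

lemma prod_insert_union [DecidableEq ι] {M : Type*} [CommMonoid M] (x : ι → M) {lo hi q : ℕ} {i : ι}
    {C₁ C₂ : Finset (LabelledBlock ι)} (h₁ : IsPairing (lo + 1) q C₁) (h₂ : IsPairing q hi C₂) :
    ∏ c ∈ insert ((lo + 1, q), i) (C₁ ∪ C₂), x c.2 =
      x i * ((∏ c ∈ C₁, x c.2) * ∏ c ∈ C₂, x c.2) := by
  have := h₁.lt
  have := h₁.bounds
  have := h₂.bounds
  rw [Finset.prod_insert (by grind), Finset.prod_union (Finset.disjoint_left.2 (by grind))]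

open Classical in
/-- The labelled noncrossing pairings of the `2 * n` points following `lo` that are alternating
below the block `root`. -/
noncomputable def alternatingPairings [Fintype ι] [LT ι] (lo n : ℕ) (root : LabelledBlock ι) :
    Finset (Finset (LabelledBlock ι)) :=
  {C ∈ ((Finset.range (lo + 2 * n + 1) ×ˢ Finset.range (lo + 2 * n + 1)) ×ˢ
    (Finset.univ : Finset ι)).powerset | IsPairing lo (lo + 2 * n + 1) C ∧ IsAlternating root C}

variable [Fintype ι]

lemma mem_alternatingPairings [LT ι] {lo n : ℕ} {root : LabelledBlock ι}
    {C : Finset (LabelledBlock ι)} :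
    C ∈ alternatingPairings lo n root ↔
      IsPairing lo (lo + 2 * n + 1) C ∧ IsAlternating root C := by
  simp only [alternatingPairings, Finset.mem_filter]
  refine and_iff_right_of_imp fun h => Finset.mem_powerset.2 fun c hc => ?_
  have := h.1.bounds c hc
  simp only [Finset.mem_product, Finset.mem_range, Finset.mem_univ, and_true]
  omega

lemma card_of_mem_alternatingPairings [LT ι] {lo n : ℕ} {root : LabelledBlock ι}
    {C : Finset (LabelledBlock ι)} (hC : C ∈ alternatingPairings lo n root) : C.card = n := by
  have := (mem_alternatingPairings.1 hC).1.two_mul_card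
  omega

lemma alternatingPairings_zero [LT ι] (lo : ℕ) (root : LabelledBlock ι) :
    alternatingPairings lo 0 root = {∅} := by
  ext C
  rw [Finset.mem_singleton]
  refine ⟨fun hC => Finset.card_eq_zero.1 (card_of_mem_alternatingPairings hC), ?_⟩
  rintro rfl
  exact mem_alternatingPairings.2 ⟨isPairing_empty lo, by simp [IsAlternating]⟩

lemma insert_union_mem_alternatingPairings [LT ι] [DecidableEq ι] {lo m k : ℕ}
    {root : LabelledBlock ι} (hlo : root.1.1 ≤ lo) (hhi : lo + 2 * (m + k + 1) + 1 ≤ root.1.2)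
    {i : ι} (hi : Oriented (lo + 1) i root.2) {C₁ C₂ : Finset (LabelledBlock ι)}
    (h₁ : C₁ ∈ alternatingPairings (lo + 1) m ((lo + 1, lo + 1 + 2 * m + 1), i))
    (h₂ : C₂ ∈ alternatingPairings (lo + 1 + 2 * m + 1) k root) :
    insert ((lo + 1, lo + 1 + 2 * m + 1), i) (C₁ ∪ C₂) ∈
      alternatingPairings lo (m + k + 1) root := by
  rw [mem_alternatingPairings] at h₁ h₂ ⊢
  rw [show lo + 2 * (m + k + 1) + 1 = lo + 1 + 2 * m + 1 + 2 * k + 1 by ring] at hhi ⊢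
  exact ⟨h₁.1.insert_union h₂.1 i,
    (isAlternating_insert_union_iff h₁.1 h₂.1 hlo hhi).2 ⟨hi, h₁.2, h₂.2⟩⟩

lemma exists_eq_insert_union_of_mem_alternatingPairings [LT ι] [DecidableEq ι] {lo n : ℕ}
    {root : LabelledBlock ι} (hlo : root.1.1 ≤ lo) (hhi : lo + 2 * (n + 1) + 1 ≤ root.1.2)
    {C : Finset (LabelledBlock ι)} (hC : C ∈ alternatingPairings lo (n + 1) root) :
    ∃ p ∈ antidiagonal n, ∃ i, Oriented (lo + 1) i root.2 ∧
      ∃ C₁ ∈ alternatingPairings (lo + 1) p.1 ((lo + 1, lo + 1 + 2 * p.1 + 1), i),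
      ∃ C₂ ∈ alternatingPairings (lo + 1 + 2 * p.1 + 1) p.2 root,
        insert ((lo + 1, lo + 1 + 2 * p.1 + 1), i) (C₁ ∪ C₂) = C := by
  obtain ⟨pairing, alternating⟩ := mem_alternatingPairings.1 hC
  obtain ⟨q, i, inner, outer, hC_eq⟩ := pairing.exists_eq_insert_union (by omega)
  rw [hC_eq, isAlternating_insert_union_iff inner outer hlo hhi] at alternating
  obtain ⟨hi, alternating_inner, alternating_outer⟩ := alternating
  have := inner.lt
  have := outer.lt
  have card_inner := inner.two_mul_card
  generalize (between (lo + 1) q C).card = m at card_inner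
  obtain ⟨k, rfl⟩ : ∃ k, n = m + k := ⟨n - m, by omega⟩
  obtain rfl : q = lo + 1 + 2 * m + 1 := by omega
  refine ⟨(m, k), Finset.HasAntidiagonal.mem_antidiagonal.2 rfl, i, hi, _,
    mem_alternatingPairings.2 ⟨inner, alternating_inner⟩, _, mem_alternatingPairings.2 ⟨?_,
      alternating_outer⟩, hC_eq.symm⟩
  convert outer using 1
  ring

variable {R : Type*} [CommRing R]

lemma sum_alternatingPairings_succ [LinearOrder ι] (x : ι → R) {lo n : ℕ} {root : LabelledBlock ι}
    (hlo : root.1.1 ≤ lo) (hhi : lo + 2 * (n + 1) + 1 ≤ root.1.2) :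
    ∑ C ∈ alternatingPairings lo (n + 1) root, ∏ c ∈ C, x c.2 =
      ∑ p ∈ antidiagonal n,
        (∑ i with Oriented (lo + 1) i root.2, x i *
          ∑ C ∈ alternatingPairings (lo + 1) p.1 ((lo + 1, lo + 1 + 2 * p.1 + 1), i),
            ∏ c ∈ C, x c.2) *
        ∑ C ∈ alternatingPairings (lo + 1 + 2 * p.1 + 1) p.2 root, ∏ c ∈ C, x c.2 := by
  simp only [Finset.sum_mul, mul_assoc, Finset.mul_sum]
  simp only [Finset.sum_sigma']
  symm
  refine Finset.sum_nbij (fun ⟨p, C₂, i, C₁⟩ => insert ((lo + 1, lo + 1 + 2 * p.1 + 1), i)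
    (C₁ ∪ C₂)) ?_ ?_ ?_ ?_
  · rintro ⟨⟨m, k⟩, C₂, i, C₁⟩ h
    simp only [Finset.mem_sigma, Finset.HasAntidiagonal.mem_antidiagonal, Finset.mem_filter_univ]
      at h
    obtain ⟨rfl, h₂, hi, h₁⟩ := h
    exact insert_union_mem_alternatingPairings hlo hhi hi h₁ h₂
  · rintro ⟨⟨m, k⟩, C₂, i, C₁⟩ h ⟨⟨m', k'⟩, C₂', i', C₁'⟩ h' heq
    simp only [SetLike.mem_coe, Finset.mem_sigma, Finset.HasAntidiagonal.mem_antidiagonal,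
      mem_alternatingPairings] at h h'
    have hi_eq : lo + 1 + 2 * m' + 1 + 2 * k' + 1 = lo + 1 + 2 * m + 1 + 2 * k + 1 := by omega
    obtain ⟨q_eq, rfl, rfl, rfl⟩ :=
      h.2.2.2.1.insert_union_inj h.2.1.1 h'.2.2.2.1 (hi_eq ▸ h'.2.1.1) heq
    obtain ⟨rfl, rfl⟩ : m = m' ∧ k = k' := by omega
    rfl
  · intro C hC
    obtain ⟨p, hp, i, hi, C₁, h₁, C₂, h₂, hC_eq⟩ :=
      exists_eq_insert_union_of_mem_alternatingPairings hlo hhi hC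
    exact ⟨⟨p, C₂, i, C₁⟩, by simp [hp, hi, h₁, h₂], hC_eq⟩
  · rintro ⟨⟨m, k⟩, C₂, i, C₁⟩ h
    simp only [Finset.mem_sigma, mem_alternatingPairings] at h
    exact (prod_insert_union x h.2.2.2.1 h.2.1.1).symm

end AlternatingPairings

section Generating

open Finset.HasAntidiagonal (antidiagonal)

variable {ι R : Type*} [LinearOrder ι] [Fintype ι] [CommRing R] [Algebra ℚ R] {x : ι → R}

lemma sum_oriented_mul_eval_abelPoly (hx : ∀ i, x i ^ 2 = 0) (n m : ℕ) (j : ι) :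
    ∑ i with Oriented m i j,
        x i * (abelPoly (∑ i, x i) n).eval (∑ l with Oriented (m + 1) l i, x l) =
      -(abelPoly (∑ i, x i) (n + 1)).eval (-∑ i with Oriented m i j, x i) := by
  rcases Nat.even_or_odd m with hm | hm
  · have upper : IsUpperSet (({i | j < i} : Finset ι) : Set ι) := by
      rw [Finset.coe_filter_univ]
      exact isUpperSet_Ioi j
    simpa [Oriented, Nat.not_odd_iff_even.2 hm, hm.add_one] using
      sum_mul_eval_abelPoly_of_isUpperSet hx n upper
  · have lower : IsLowerSet (({i | i < j} : Finset ι) : Set ι) := by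
      rw [Finset.coe_filter_univ]
      exact isLowerSet_Iio j
    simpa [Oriented, hm, parity_simps] using sum_mul_eval_abelPoly_of_isLowerSet hx n lower

lemma sum_alternatingPairings_eq_eval_abelPoly (hx : ∀ i, x i ^ 2 = 0) (n : ℕ) {lo : ℕ}
    {root : LabelledBlock ι} (hlo : root.1.1 ≤ lo) (hhi : lo + 2 * n + 1 ≤ root.1.2) :
    ∑ C ∈ alternatingPairings lo n root, ∏ c ∈ C, x c.2 =
      (abelPoly (∑ i, x i) n).eval (∑ i with Oriented (lo + 1) i root.2, x i) := by
  induction n using Nat.strong_induction_on generalizing lo root with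
  | h n ih =>
  cases n with
  | zero => simp [alternatingPairings_zero]
  | succ n =>
    rw [sum_alternatingPairings_succ x hlo hhi, ← sum_antidiagonal_neg_eval_neg_abelPoly_mul]
    refine Finset.sum_congr rfl fun p hp => ?_
    rw [Finset.HasAntidiagonal.mem_antidiagonal] at hp
    congr 1
    · rw [← sum_oriented_mul_eval_abelPoly hx]
      exact Finset.sum_congr rfl fun i _ =>
        congrArg (x i * ·) (ih p.1 (by omega) (root := (_, i)) le_rfl le_rfl)
    · rw [ih p.2 (by omega) (by omega) (by omega)]
      simp [Oriented, parity_simps]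

/-- The imaginary block `(0, 2n + 1)`, labelled `j`. -/
abbrev imaginaryBlock {ι : Type*} (n : ℕ) (j : ι) : LabelledBlock ι := ((0, 2 * n + 1), j)

lemma sum_mul_sum_alternatingPairings (hx : ∀ i, x i ^ 2 = 0) {n : ℕ}
    (hn : Fintype.card ι = n + 1) :
    ∑ j, x j * ∑ C ∈ alternatingPairings 0 n (imaginaryBlock n j), ∏ c ∈ C, x c.2 =
      n ^ n * ∏ i, x i := by
  have closed_form (j : ι) :
      ∑ C ∈ alternatingPairings 0 n (imaginaryBlock n j), ∏ c ∈ C, x c.2 =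
        (abelPoly (∑ i, x i) n).eval (∑ i with i < j, x i) :=
    (sum_alternatingPairings_eq_eval_abelPoly hx n (root := imaginaryBlock n j) (Nat.zero_le 0)
      (by simp)).trans (by simp [Oriented])
  have pow_eq := sum_pow_card_eq_factorial_mul_prod hx Finset.univ
  rw [Finset.card_univ, hn] at pow_eq
  calc
    _ = -(abelPoly (∑ i, x i) (n + 1)).eval (-∑ i, x i) := by
      simp_rw [closed_form]
      exact sum_mul_eval_abelPoly_of_isUpperSet hx n (by simp [isUpperSet_univ])
    _ = ((n + 1).factorial : ℚ)⁻¹ • (n ^ n * (∑ i, x i) ^ (n + 1)) :=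
      neg_eval_neg_self_abelPoly_succ _ n
    _ = n ^ n * ∏ i, x i := by
      rw [pow_eq, mul_left_comm, ← nsmul_eq_mul, ← Nat.cast_smul_eq_nsmul ℚ, smul_smul,
        inv_mul_cancel₀ (by positivity), one_smul]

/-- `s.2` is a noncrossing pairing of `{1, …, 2n}` whose labels, together with the label `s.1` of
the imaginary block, form a linear extension of the alternating forest order. -/
structure IsLinearExtension {ι : Type*} [LT ι] (n : ℕ)
    (s : (_ : ι) × Finset (LabelledBlock ι)) : Prop where
  isPairing : IsPairing 0 (2 * n + 1) s.2
  isAlternating : IsAlternating (imaginaryBlock n s.1) s.2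
  injOn_label : Set.InjOn Prod.snd (insert (imaginaryBlock n s.1) s.2 : Set (LabelledBlock ι))

lemma IsPairing.imaginaryBlock_notMem {ι : Type*} {hi n : ℕ} {C : Finset (LabelledBlock ι)}
    (h : IsPairing 0 hi C) (j : ι) : imaginaryBlock n j ∉ C :=
  fun mem => (h.bounds _ mem).1.false

lemma card_isLinearExtension (ι : Type*) [LinearOrder ι] [Fintype ι] {n : ℕ}
    (hn : Fintype.card ι = n + 1) :
    Nat.card {s : (_ : ι) × Finset (LabelledBlock ι) // IsLinearExtension n s} = n ^ n := by
  classical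
  set S := (Finset.univ : Finset ι).sigma fun j => alternatingPairings 0 n (imaginaryBlock n j)
  have mem_S (s) : s ∈ S ↔ IsPairing 0 (2 * n + 1) s.2 ∧
      IsAlternating (imaginaryBlock n s.1) s.2 := by
    simp [S, mem_alternatingPairings]
  set extend := fun s : (_ : ι) × Finset (LabelledBlock ι) => insert (imaginaryBlock n s.1) s.2
  have card_extend (s) (hs : s ∈ S) : (extend s).card = Fintype.card ι := by
    have := ((mem_S s).1 hs).1.two_mul_card
    rw [Finset.card_insert_of_notMem (((mem_S s).1 hs).1.imaginaryBlock_notMem _)]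
    omega
  have sum_extend : ∑ s ∈ S, ∏ c ∈ extend s, squareZeroVar ℚ c.2 =
      (n ^ n : ℕ) • ∏ i, squareZeroVar ℚ i := by
    rw [nsmul_eq_mul, Nat.cast_pow, ← sum_mul_sum_alternatingPairings squareZeroVar_sq hn]
    simp only [Finset.mul_sum, Finset.sum_sigma']
    exact Finset.sum_congr rfl fun s hs =>
      Finset.prod_insert (((mem_S s).1 hs).1.imaginaryBlock_notMem _)
  rw [sum_prod_comp_eq_card_nsmul squareZeroVar_sq _ _ _ card_extend, ← sub_eq_zero,
    ← Nat.cast_smul_eq_nsmul ℚ, ← Nat.cast_smul_eq_nsmul ℚ, ← sub_smul,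
    smul_prod_squareZeroVar_eq_zero_iff, sub_eq_zero, Nat.cast_inj] at sum_extend
  refine (Nat.subtype_card _ fun s => ?_).trans sum_extend
  simp only [Finset.mem_filter, mem_S, extend, Finset.coe_insert]
  exact ⟨fun h => ⟨h.1.1, h.1.2, h.2⟩, fun h => ⟨⟨h.1, h.2⟩, h.3⟩⟩

end Generating

section NCP

variable {n : ℕ} (π : NCP n) {ι : Type*}

lemma NCP.ext_blocks {π π' : NCP n} (h : π.blocks = π'.blocks) : π = π' := by
  cases π
  cases π'
  cases h
  rfl

lemma NCP.eq_of_mem {b c : ℕ × ℕ} (hb : b ∈ π.blocks) (hc : c ∈ π.blocks) {m : ℕ}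
    (hmb : m = b.1 ∨ m = b.2) (hmc : m = c.1 ∨ m = c.2) : b = c := by
  have := π.lt_of_mem b hb
  have := π.mem_range b hb
  exact (π.cover m (by omega) (by omega)).unique ⟨hb, hmb⟩ ⟨hc, hmc⟩

lemma NCP.fst_ne_snd {b c : ℕ × ℕ} (hb : b ∈ π.blocks) (hc : c ∈ π.blocks) : b.1 ≠ c.2 := by
  intro h
  obtain rfl := π.eq_of_mem hb hc (.inl rfl) (.inr h)
  exact (π.lt_of_mem b hb).ne h

lemma NCP.card_fst_lt_add_card_snd_lt {m : ℕ} (hm : m ≤ 2 * n + 1) :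
    (π.blocks.filter fun c => c.1 < m).card + (π.blocks.filter fun c => c.2 < m).card = m - 1 := by
  set opened := π.blocks.filter fun c => c.1 < m
  set closed := π.blocks.filter fun c => c.2 < m
  have points_eq : Finset.Ico 1 m = opened.image Prod.fst ∪ closed.image Prod.snd := by
    ext k
    simp only [opened, closed, Finset.mem_Ico, Finset.mem_union, Finset.mem_image,
      Finset.mem_filter]
    constructor
    · rintro ⟨one_le, lt_m⟩
      obtain ⟨c, ⟨hc, rfl | rfl⟩, -⟩ := π.cover k one_le (by omega)
      exacts [.inl ⟨c, ⟨hc, lt_m⟩, rfl⟩, .inr ⟨c, ⟨hc, lt_m⟩, rfl⟩]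
    · have := π.mem_range
      have := π.lt_of_mem
      grind
  have disjoint_points : Disjoint (opened.image Prod.fst) (closed.image Prod.snd) := by
    have := @NCP.fst_ne_snd n π
    simp only [opened, closed, Finset.disjoint_left, Finset.mem_image, Finset.mem_filter]
    grind
  have injOn_fst : Set.InjOn Prod.fst (opened : Set (ℕ × ℕ)) := fun c hc d hd hcd =>
    π.eq_of_mem (Finset.mem_filter.1 hc).1 (Finset.mem_filter.1 hd).1 (.inl rfl) (.inl hcd)
  have injOn_snd : Set.InjOn Prod.snd (closed : Set (ℕ × ℕ)) := fun c hc d hd hcd =>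
    π.eq_of_mem (Finset.mem_filter.1 hc).1 (Finset.mem_filter.1 hd).1 (.inr rfl) (.inr hcd)
  rw [← Finset.card_image_of_injOn injOn_fst, ← Finset.card_image_of_injOn injOn_snd,
    ← Finset.card_union_of_disjoint disjoint_points, ← points_eq, Nat.card_Ico]

open Classical in
lemma NCP.card_fst_lt_eq_card_snd_lt_add_card_isOuter {b : ℕ × ℕ} (hb : b ∈ π.blocks) :
    (π.blocks.filter fun c => c.1 < b.1).card =
      (π.blocks.filter fun c => c.2 < b.1).card + (π.blocks.filter fun c => IsOuter c b).card := by
  have lt_b := π.lt_of_mem b hb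
  rw [← Finset.card_union_of_disjoint]
  · congr 1
    ext c
    have := π.noncrossing c
    have := π.lt_of_mem c
    have := π.fst_ne_snd (c := c) hb
    have := π.eq_of_mem (b := c) (m := c.2) (hc := hb)
    simp only [IsOuter, Finset.mem_filter, Finset.mem_union]
    grind
  · refine Finset.disjoint_filter.2 fun c _ hcb hc => ?_
    have := hc.2
    omega

-- Of the points to the left of `b`, each block closing there owns two and each outer block one.
lemma NCP.fst_eq_two_mul_card_add_blockDepth {b : ℕ × ℕ} (hb : b ∈ π.blocks) :
    b.1 = 2 * (π.blocks.filter fun c => c.2 < b.1).card + blockDepth π b := by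
  have := π.mem_range b hb
  have := π.lt_of_mem b hb
  have card_points := π.card_fst_lt_add_card_snd_lt (m := b.1) (by omega)
  have := π.card_fst_lt_eq_card_snd_lt_add_card_isOuter hb
  rw [blockDepth]
  omega

lemma NCP.odd_blockDepth_iff {b : ℕ × ℕ} (hb : b ∈ π.blocks) :
    Odd (blockDepth π b) ↔ Odd b.1 := by
  have := π.fst_eq_two_mul_card_add_blockDepth hb
  rw [Nat.odd_iff, Nat.odd_iff]
  omega

/-- The blocks of `π`, labelled by `f`. -/
def labelledBlocks (f : {b : ℕ × ℕ // b ∈ π.blocks} → ι) : Finset (LabelledBlock ι) :=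
  π.blocks.attach.map ⟨fun b => (b.1, f b), fun _ _ h => Subtype.ext (congrArg Prod.fst h)⟩

variable {π} {f : {b : ℕ × ℕ // b ∈ π.blocks} → ι}

lemma mem_labelledBlocks {c : LabelledBlock ι} :
    c ∈ labelledBlocks π f ↔ ∃ b : {b : ℕ × ℕ // b ∈ π.blocks}, (b.1, f b) = c := by
  simp only [labelledBlocks, Finset.mem_map, Finset.mem_attach, true_and]
  rfl

lemma forall_mem_labelledBlocks {P : LabelledBlock ι → Prop} :
    (∀ c ∈ labelledBlocks π f, P c) ↔ ∀ b, P (b.1, f b) := by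
  simp only [mem_labelledBlocks, forall_exists_index, forall_apply_eq_imp_iff]

lemma isPairing_labelledBlocks (π : NCP n) (f : {b : ℕ × ℕ // b ∈ π.blocks} → ι) :
    IsPairing 0 (2 * n + 1) (labelledBlocks π f) where
  lt := by omega
  bounds := forall_mem_labelledBlocks.2 fun b => by
    have := π.lt_of_mem b.1 b.2
    have := π.mem_range b.1 b.2
    dsimp only
    omega
  cover m _ _ := by
    obtain ⟨b, ⟨hb, hm⟩, unique⟩ := π.cover m (by omega) (by omega)
    refine ⟨(b, f ⟨b, hb⟩), ⟨mem_labelledBlocks.2 ⟨⟨b, hb⟩, rfl⟩, hm⟩, fun c ⟨hc, hmc⟩ => ?_⟩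
    obtain ⟨d, rfl⟩ := mem_labelledBlocks.1 hc
    obtain rfl : d = ⟨b, hb⟩ := Subtype.ext (unique d.1 ⟨d.2, hmc⟩)
    rfl
  noncrossing := by
    simp only [forall_mem_labelledBlocks]
    exact fun b c => π.noncrossing b.1 b.2 c.1 c.2

lemma NCP.card_blocks (π : NCP n) : π.blocks.card = n := by
  have := (isPairing_labelledBlocks π id).two_mul_card
  rw [labelledBlocks, Finset.card_map, Finset.card_attach] at this
  omega

lemma IsPairing.exists_labelledBlocks_eq {C : Finset (LabelledBlock ι)}
    (h : IsPairing 0 (2 * n + 1) C) :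
    ∃ (π : NCP n) (f : {b : ℕ × ℕ // b ∈ π.blocks} → ι), labelledBlocks π f = C := by
  classical
  let π : NCP n :=
    { blocks := C.image Prod.fst
      lt_of_mem := Finset.forall_mem_image.2 fun c hc => (h.bounds c hc).2.1
      mem_range := Finset.forall_mem_image.2 fun c hc => by
        have := h.bounds c hc
        omega
      cover := fun m hm hm' => by
        obtain ⟨c, ⟨hc, hmc⟩, unique⟩ := h.cover m (by omega) (by omega)
        refine ⟨c.1, ⟨Finset.mem_image_of_mem _ hc, hmc⟩, fun b ⟨hb, hmb⟩ => ?_⟩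
        obtain ⟨d, hd, rfl⟩ := Finset.mem_image.1 hb
        rw [unique d ⟨hd, hmb⟩]
      noncrossing := Finset.forall_mem_image.2 fun b hb =>
        Finset.forall_mem_image.2 fun c hc => h.noncrossing b hb c hc }
  have exists_label (b : {b : ℕ × ℕ // b ∈ π.blocks}) : ∃ i, (b.1, i) ∈ C := by
    obtain ⟨c, hc, hcb⟩ := Finset.mem_image.1 b.2
    exact ⟨c.2, hcb ▸ hc⟩
  choose f hf using exists_label
  refine ⟨π, f, Finset.ext fun c => mem_labelledBlocks.trans ⟨?_, fun hc => ?_⟩⟩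
  · rintro ⟨b, rfl⟩
    exact hf b
  · have mem := Finset.mem_image_of_mem Prod.fst hc
    exact ⟨⟨c.1, mem⟩, h.eq_of_mem (hf ⟨c.1, mem⟩) hc (.inl rfl) (.inl rfl)⟩

lemma isParent_labelledBlocks_iff {j : ι} {b : {b : ℕ × ℕ // b ∈ π.blocks}} {d : LabelledBlock ι} :
    IsParent (imaginaryBlock n j) (labelledBlocks π f) d (b.1, f b) ↔
      (∃ c : {b : ℕ × ℕ // b ∈ π.blocks}, NearestOuter π c.1 b.1 ∧ (c.1, f c) = d) ∨
        d = imaginaryBlock n j ∧ ∀ e ∈ π.blocks, ¬ IsOuter e b.1 := by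
  have range_b := π.mem_range b.1 b.2
  rw [IsParent, or_and_right, or_comm, forall_mem_labelledBlocks, mem_labelledBlocks]
  refine or_congr ⟨?_, ?_⟩ (and_congr_right ?_)
  · rintro ⟨⟨c, rfl⟩, hout, nearest⟩
    exact ⟨c, ⟨c.2, b.2, hout, fun e he => nearest ⟨e, he⟩⟩, rfl⟩
  · rintro ⟨c, ⟨-, -, hout, nearest⟩, rfl⟩
    exact ⟨⟨c, rfl⟩, hout, fun e => nearest e.1 e.2⟩
  · rintro rfl
    refine ⟨fun h e he hout => ?_, fun h =>
      ⟨⟨range_b.1, Nat.lt_succ_of_le range_b.2⟩, fun e hout => (h e.1 e.2 hout).elim⟩⟩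
    exact (Nat.succ_le_iff.1 (π.mem_range e he).1).not_ge (h.2 ⟨e, he⟩ hout)

lemma NCP.odd_fst_of_forall_not_isOuter {b : ℕ × ℕ} (hb : b ∈ π.blocks)
    (top : ∀ e ∈ π.blocks, ¬ IsOuter e b) : Odd b.1 := by
  classical
  rw [← π.odd_blockDepth_iff hb, blockDepth, Finset.filter_false_of_mem top]
  exact odd_one

open Classical in
lemma isAlternating_labelledBlocks_iff [LT ι] {j : ι} :
    IsAlternating (imaginaryBlock n j) (labelledBlocks π f) ↔
      (∀ b c : {b : ℕ × ℕ // b ∈ π.blocks}, NearestOuter π c.1 b.1 →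
        if Odd (blockDepth π b.1) then f b < f c else f c < f b) ∧
      ∀ b : {b : ℕ × ℕ // b ∈ π.blocks}, (∀ d ∈ π.blocks, ¬ IsOuter d b.1) → f b < j := by
  simp only [IsAlternating, forall_mem_labelledBlocks, isParent_labelledBlocks_iff, or_imp,
    forall_and, and_imp, forall_eq, forall_exists_index, forall_apply_eq_imp_iff₂]
  refine and_congr (forall_congr' fun b => ?_) (forall_congr' fun b => ?_)
  · simp only [Oriented, π.odd_blockDepth_iff b.2]
  · refine forall_congr' fun top => ?_
    rw [Oriented, if_pos (NCP.odd_fst_of_forall_not_isOuter b.2 top)]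

/-- A labelling of the blocks of a noncrossing pair partition and of its imaginary block (the value
at `none`), recorded as the label of the imaginary block and the set of labelled blocks. -/
def toLabelledPairing (t : (π : NCP n) × (Option {b : ℕ × ℕ // b ∈ π.blocks} → ι)) :
    (_ : ι) × Finset (LabelledBlock ι) :=
  ⟨t.2 none, labelledBlocks t.1 (t.2 ∘ some)⟩

lemma image_fst_labelledBlocks (π : NCP n) (f : {b : ℕ × ℕ // b ∈ π.blocks} → ι) :
    (labelledBlocks π f).image Prod.fst = π.blocks := by
  ext b
  simp only [Finset.mem_image, mem_labelledBlocks]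
  constructor
  · rintro ⟨_, ⟨c, rfl⟩, rfl⟩
    exact c.2
  · exact fun hb => ⟨_, ⟨⟨b, hb⟩, rfl⟩, rfl⟩

lemma labelledBlocks_injective (π : NCP n) :
    Function.Injective (labelledBlocks (ι := ι) π) := by
  intro f g h
  funext b
  have mem : (b.1, f b) ∈ labelledBlocks π g := h ▸ mem_labelledBlocks.2 ⟨b, rfl⟩
  obtain ⟨c, hc⟩ := mem_labelledBlocks.1 mem
  obtain ⟨block_eq, label_eq⟩ := Prod.mk_inj.1 hc
  rw [← label_eq, Subtype.ext block_eq]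

lemma toLabelledPairing_injective : Function.Injective (toLabelledPairing (n := n) (ι := ι)) := by
  rintro ⟨π, g⟩ ⟨π', g'⟩ h
  obtain ⟨root_eq, pairing_eq⟩ := Sigma.mk.inj_iff.1 h
  have pairing_eq := eq_of_heq pairing_eq
  obtain rfl : π = π' := NCP.ext_blocks <| by
    rw [← image_fst_labelledBlocks π, pairing_eq, image_fst_labelledBlocks]
  suffices g = g' by rw [this]
  funext o
  cases o with
  | none => exact root_eq
  | some b => exact congrFun (labelledBlocks_injective π pairing_eq) b

lemma IsPairing.exists_toLabelledPairing_eq {s : (_ : ι) × Finset (LabelledBlock ι)}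
    (h : IsPairing 0 (2 * n + 1) s.2) :
    ∃ t : (π : NCP n) × (Option {b : ℕ × ℕ // b ∈ π.blocks} → ι), toLabelledPairing t = s := by
  obtain ⟨π, f, hf⟩ := h.exists_labelledBlocks_eq
  exact ⟨⟨π, fun o => o.elim s.1 f⟩, Sigma.ext rfl (heq_of_eq hf)⟩

lemma injOn_label_iff_injective {g : Option {b : ℕ × ℕ // b ∈ π.blocks} → ι} :
    Set.InjOn Prod.snd (insert (imaginaryBlock n (g none)) (labelledBlocks π (g ∘ some)) :
      Set (LabelledBlock ι)) ↔ Function.Injective g := by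
  set block : Option {b : ℕ × ℕ // b ∈ π.blocks} → LabelledBlock ι :=
    fun o => o.elim (imaginaryBlock n (g none)) fun b => (b.1, g (some b))
  have range_eq : Set.range block =
      insert (imaginaryBlock n (g none)) ↑(labelledBlocks π (g ∘ some)) := by
    ext c
    simp only [Set.mem_range, Option.exists, Set.mem_insert_iff, Finset.mem_coe,
      mem_labelledBlocks, eq_comm (a := c)]
    rfl
  have label_eq : Prod.snd ∘ block = g := by
    funext o
    cases o <;> rfl
  have block_injective : Function.Injective block := by
    have fst_ne_zero (b : {b : ℕ × ℕ // b ∈ π.blocks}) : b.1.1 ≠ 0 :=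
      (Nat.succ_le_iff.1 (π.mem_range b.1 b.2).1).ne'
    rintro (_ | b) (_ | c) h
    · rfl
    · exact (fst_ne_zero c (congrArg (·.1.1) h).symm).elim
    · exact (fst_ne_zero b (congrArg (·.1.1) h)).elim
    · exact congrArg some (Subtype.ext (congrArg Prod.fst h))
  rw [← range_eq, ← label_eq]
  exact ⟨fun h => (h.injective_iff _ subset_rfl).2 block_injective, fun h => h.injOn_range⟩

open Classical in
lemma isLinearExtension_toLabelledPairing_iff [LT ι]
    {g : Option {b : ℕ × ℕ // b ∈ π.blocks} → ι} :
    IsLinearExtension n (toLabelledPairing ⟨π, g⟩) ↔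
      ((∀ b c : {b : ℕ × ℕ // b ∈ π.blocks}, NearestOuter π c.1 b.1 →
          if Odd (blockDepth π b.1) then g (some b) < g (some c) else g (some c) < g (some b)) ∧
        ∀ b : {b : ℕ × ℕ // b ∈ π.blocks},
          (∀ d ∈ π.blocks, ¬ IsOuter d b.1) → g (some b) < g none) ∧
      Function.Injective g :=
  ⟨fun h => ⟨isAlternating_labelledBlocks_iff.1 h.isAlternating,
      injOn_label_iff_injective.1 h.injOn_label⟩,
    fun h => ⟨isPairing_labelledBlocks π _, isAlternating_labelledBlocks_iff.2 h.1,
      injOn_label_iff_injective.2 h.2⟩⟩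

lemma NCP.bijective_of_injective [Fintype ι] (hn : Fintype.card ι = n + 1)
    {g : Option {b : ℕ × ℕ // b ∈ π.blocks} → ι} (hg : Function.Injective g) :
    Function.Bijective g := by
  refine (Fintype.bijective_iff_injective_and_card g).2 ⟨hg, ?_⟩
  rw [Fintype.card_option, Fintype.card_coe, π.card_blocks, hn]

end NCP

open Classical in
theorem stmt_19 (n : ℕ) (hn : 1 ≤ n) :
    Nat.card (Σ π : NCP n,
      {ℓ : Option {b : ℕ × ℕ // b ∈ π.blocks} ≃ Fin (n + 1) //
        (∀ b c : {b : ℕ × ℕ // b ∈ π.blocks}, NearestOuter π c.1 b.1 →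
          if Odd (blockDepth π b.1) then ℓ (some b) < ℓ (some c)
          else ℓ (some c) < ℓ (some b)) ∧
        (∀ b : {b : ℕ × ℕ // b ∈ π.blocks},
          (∀ d ∈ π.blocks, ¬ IsOuter d b.1) → ℓ (some b) < ℓ none)})
      = n ^ n := by
  rw [← card_isLinearExtension (Fin (n + 1)) (Fintype.card_fin _)]
  refine Nat.card_eq_of_bijective (fun p => ⟨toLabelledPairing ⟨p.1, p.2.1⟩,
    isLinearExtension_toLabelledPairing_iff.2 ⟨p.2.2, p.2.1.injective⟩⟩) ⟨?_, ?_⟩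
  · rintro ⟨π, ℓ, _⟩ ⟨π', ℓ', _⟩ h
    obtain ⟨rfl, labels_eq⟩ :=
      Sigma.mk.inj_iff.1 (toLabelledPairing_injective (congrArg Subtype.val h))
    obtain rfl : ℓ = ℓ' := DFunLike.coe_injective (eq_of_heq labels_eq)
    rfl
  · rintro ⟨s, hs⟩
    obtain ⟨⟨π, g⟩, rfl⟩ := hs.isPairing.exists_toLabelledPairing_eq
    obtain ⟨alternating, injective⟩ := isLinearExtension_toLabelledPairing_iff.1 hs
    exact ⟨⟨π, .ofBijective g (NCP.bijective_of_injective (Fintype.card_fin _) injective),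
      alternating⟩, rfl⟩
end
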